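/- Variational principle for induced pressure: Let (X,f) be a TDS and φ, ψ ∈ C(X,ℝ) with ψ > 0. Then P_ψ(φ) = sup{ (h_ν(f) + ∫φ dν) / ∫ψ dν : ν ∈ M(X,f) }. -/

import Mathlib

open MeasureTheory Filter Topology Set

variable {X : Type*}

/-- Birkhoff sum `S_n φ (x) = ∑_{i<n} φ(f^i x)`. -/
noncomputable def birkhoff (f : X → X) (φ : X → ℝ) (n : ℕ) (x : X) : ℝ :=
  ∑ i ∈ Finset.range n, φ (f^[i] x)

/-- The `n`-th Bowen metric. -/
noncomputable def dynDist [MetricSpace X] (f : X → X) (n : ℕ) (x y : X) : ℝ :=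
  ⨆ i : Fin n, dist (f^[(i : ℕ)] x) (f^[(i : ℕ)] y)

/-- `F` is an `(n,ε)`-spanning set of `Z`. -/
def IsSpanningSet [MetricSpace X] (f : X → X) (n : ℕ) (ε : ℝ) (Z : Set X) (F : Finset X) : Prop :=
  ∀ y ∈ Z, ∃ x ∈ F, dynDist f n x y ≤ ε

/-- `E` is `(n,ε)`-separated. -/
def IsSeparatedSet [MetricSpace X] (f : X → X) (n : ℕ) (ε : ℝ) (E : Finset X) : Prop :=
  ∀ x ∈ E, ∀ y ∈ E, x ≠ y → ε < dynDist f n x y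

/-- `S_T = {n : ∃ x, S_n ψ(x) ≤ T < S_{n+1} ψ(x)}`. -/
def STset (f : X → X) (ψ : X → ℝ) (T : ℝ) : Set ℕ :=
  {n | ∃ x : X, birkhoff f ψ n x ≤ T ∧ T < birkhoff f ψ (n + 1) x}

/-- `X_n = {x : S_n ψ(x) ≤ T < S_{n+1} ψ(x)}`. -/
def Xset (f : X → X) (ψ : X → ℝ) (T : ℝ) (n : ℕ) : Set X :=
  {x | birkhoff f ψ n x ≤ T ∧ T < birkhoff f ψ (n + 1) x}

/-- `Q_{ψ,T}(f,φ,ε)`, the spanning-set quantity. -/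
noncomputable def Qspan [MetricSpace X] (f : X → X) (φ ψ : X → ℝ) (T ε : ℝ) : ℝ :=
  sInf { r : ℝ | ∃ F : ℕ → Finset X,
    (∀ n ∈ STset f ψ T, IsSpanningSet f n ε (Xset f ψ T n) (F n)) ∧
    r = ∑' n : ℕ, Set.indicator (STset f ψ T)
        (fun n => ∑ x ∈ F n, Real.exp (birkhoff f φ n x)) n }

/-- `P_{ψ,T}(f,φ,ε)`, the separated-set quantity. -/
noncomputable def Psep [MetricSpace X] (f : X → X) (φ ψ : X → ℝ) (T ε : ℝ) : ℝ :=
  sSup { r : ℝ | ∃ E : ℕ → Finset X,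
    (∀ n ∈ STset f ψ T, (E n : Set X) ⊆ Xset f ψ T n ∧ IsSeparatedSet f n ε (E n)) ∧
    r = ∑' n : ℕ, Set.indicator (STset f ψ T)
        (fun n => ∑ x ∈ E n, Real.exp (birkhoff f φ n x)) n }

/-- The `ψ`-induced topological pressure of `φ`. -/
noncomputable def inducedPressure [MetricSpace X] (f : X → X) (φ ψ : X → ℝ) : EReal :=
  ⨆ (ε : ℝ) (_ : 0 < ε),
    Filter.limsup (fun T : ℝ => ((T⁻¹ * Real.log (Qspan f φ ψ T ε) : ℝ) : EReal)) atTop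

/-- Largest sum over `(n,ε)`-separated sets of `X`. -/
noncomputable def sepSum [MetricSpace X] (f : X → X) (φ : X → ℝ) (n : ℕ) (ε : ℝ) : ℝ :=
  sSup { r : ℝ | ∃ E : Finset X, IsSeparatedSet f n ε E ∧
    r = ∑ x ∈ E, Real.exp (birkhoff f φ n x) }

/-- The classical (Walters) topological pressure. -/
noncomputable def topPressure [MetricSpace X] (f : X → X) (φ : X → ℝ) : EReal :=
  ⨆ (ε : ℝ) (_ : 0 < ε),
    Filter.limsup (fun n : ℕ => (((n : ℝ)⁻¹ * Real.log (sepSum f φ n ε) : ℝ) : EReal)) atTop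
/-- The cell of the dynamical refinement `⋁_{i<n} f^{-i} P` indexed by itinerary `w`. -/
noncomputable def cellOf (f : X → X) {k n : ℕ} (P : Fin k → Set X) (w : Fin n → Fin k) : Set X :=
  ⋂ i : Fin n, f^[(i : ℕ)] ⁻¹' P (w i)

/-- `P` is a finite measurable partition of `X`. -/
def IsMeasPartition [MeasurableSpace X] {k : ℕ} (P : Fin k → Set X) : Prop :=
  (∀ i, MeasurableSet (P i)) ∧ Pairwise (Function.onFun Disjoint P) ∧ (⋃ i, P i) = Set.univ

/-- Entropy `H(⋁_{i<n} f^{-i} P)` of the `n`-th dynamical refinement. -/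
noncomputable def partitionEntropy [MeasurableSpace X] (μ : Measure X) (f : X → X)
    {k : ℕ} (P : Fin k → Set X) (n : ℕ) : ℝ :=
  ∑ w : Fin n → Fin k, Real.negMulLog (μ (cellOf f P w)).toReal

/-- Kolmogorov–Sinai (measure-theoretic) entropy `h_μ(f)`. -/
noncomputable def ksEntropy [MeasurableSpace X] (μ : Measure X) (f : X → X) : EReal :=
  ⨆ (k : ℕ) (P : Fin k → Set X) (_ : IsMeasPartition P),
    ⨅ n : ℕ, ((((n : ℝ) + 1)⁻¹ * partitionEntropy μ f P (n + 1) : ℝ) : EReal)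

/-- `μ` is an equilibrium measure for `ψ` and `φ`:
`(h_μ(f) + ∫ φ dμ) / ∫ ψ dμ = P_ψ(φ)` (written multiplicatively in `EReal`). -/
noncomputable def IsEquilibriumMeasure [MetricSpace X] [MeasurableSpace X]
    (f : X → X) (φ ψ : X → ℝ) (μ : Measure X) : Prop :=
  (ksEntropy μ f + ((∫ x, φ x ∂μ : ℝ) : EReal)) * (((∫ x, ψ x ∂μ)⁻¹ : ℝ) : EReal)
    = inducedPressure f φ ψ

section Entropy

variable {ι κ τ : Type*}

/-- All preimages under `ξ` are measurable. -/
def FinMeas [MeasurableSpace X] (ξ : X → ι) : Prop := ∀ s : Set ι, MeasurableSet (ξ ⁻¹' s)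

lemma FinMeas.of_singleton [MeasurableSpace X] [Finite ι] {ξ : X → ι}
    (h : ∀ i, MeasurableSet (ξ ⁻¹' {i})) : FinMeas ξ := by
  intro s
  rw [← biUnion_preimage_singleton]
  exact s.toFinite.measurableSet_biUnion fun i _ => h i

lemma FinMeas.comp_left [MeasurableSpace X] {ξ : X → ι} (h : FinMeas ξ) (g : ι → κ) :
    FinMeas (g ∘ ξ) := fun s => h (g ⁻¹' s)

lemma FinMeas.comp_measurable [MeasurableSpace X] {ξ : X → ι} (h : FinMeas ξ) {f : X → X}
    (hf : Measurable f) : FinMeas (ξ ∘ f) := fun s => hf (h s)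

lemma FinMeas.prodMk [MeasurableSpace X] [Finite ι] [Finite κ] {ξ : X → ι} {η : X → κ}
    (hξ : FinMeas ξ) (hη : FinMeas η) : FinMeas fun x => (ξ x, η x) := by
  refine .of_singleton fun p => ?_
  have : (fun x => (ξ x, η x)) ⁻¹' {p} = ξ ⁻¹' {p.1} ∩ η ⁻¹' {p.2} := by
    ext x; simp [Prod.ext_iff]
  rw [this]
  exact (hξ _).inter (hη _)

lemma FinMeas.const [MeasurableSpace X] (c : ι) : FinMeas fun _ : X => c :=
  fun s => by by_cases h : c ∈ s <;> simp [h]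

/-- The Shannon entropy of a finite-valued function. -/
noncomputable def ent [MeasurableSpace X] [Fintype ι] (μ : Measure X) (ξ : X → ι) : ℝ :=
  ∑ i, Real.negMulLog (μ.real (ξ ⁻¹' {i}))

/-- The itinerary of length `n` of a point through `ξ`. -/
def itin (f : X → X) (ξ : X → ι) (n : ℕ) (x : X) : Fin n → ι := fun i => ξ (f^[i] x)

lemma FinMeas.itin [MeasurableSpace X] [Finite ι] {ξ : X → ι} (hξ : FinMeas ξ) {f : X → X}
    (hf : Measurable f) (n : ℕ) : FinMeas (itin f ξ n) := by
  refine .of_singleton fun w => ?_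
  have : _root_.itin f ξ n ⁻¹' {w} = ⋂ i : Fin n, (ξ ∘ f^[i]) ⁻¹' {w i} := by
    ext x; simp [_root_.itin, funext_iff]
  rw [this]
  exact .iInter fun i => hξ.comp_measurable (hf.iterate i) _

lemma negMulLog_sum_le (s : Finset ι) (p : ι → ℝ) (hp : ∀ i, 0 ≤ p i) :
    Real.negMulLog (∑ i ∈ s, p i) ≤ ∑ i ∈ s, Real.negMulLog (p i) := by
  simp only [Real.negMulLog_eq_neg, Finset.sum_neg_distrib, neg_le_neg_iff, Finset.sum_mul]
  refine Finset.sum_le_sum fun i hi => ?_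
  rcases (hp i).eq_or_lt with h | h
  · simp [← h]
  · exact mul_le_mul_of_nonneg_left
      (Real.log_le_log h (Finset.single_le_sum (fun j _ => hp j) hi)) h.le

/-- Preimages of `g ∘ ξ` decompose into the fibres of `ξ`. -/
lemma measureReal_preimage_comp [MeasurableSpace X] [Fintype ι] [DecidableEq κ] (μ : Measure X)
    [IsFiniteMeasure μ] {ξ : X → ι} (hξ : FinMeas ξ) (g : ι → κ) (j : κ) :
    μ.real ((g ∘ ξ) ⁻¹' {j}) = ∑ i with g i = j, μ.real (ξ ⁻¹' {i}) := by
  have : (g ∘ ξ) ⁻¹' {j} = ⋃ i ∈ Finset.univ.filter (fun i => g i = j), ξ ⁻¹' {i} := by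
    ext x; simp
  rw [this, measureReal_biUnion_finset]
  · intro i _ i' _ h
    exact Disjoint.preimage _ (by simpa using h)
  · exact fun i _ => hξ _

variable [MeasurableSpace X] [Fintype ι] [Fintype κ] [Fintype τ]

lemma ent_nonneg (μ : Measure X) [IsProbabilityMeasure μ] (ξ : X → ι) : 0 ≤ ent μ ξ :=
  Finset.sum_nonneg fun _ _ => Real.negMulLog_nonneg measureReal_nonneg measureReal_le_one

lemma sum_measureReal_preimage (μ : Measure X) [IsProbabilityMeasure μ] {ξ : X → ι}
    (hξ : FinMeas ξ) : ∑ i, μ.real (ξ ⁻¹' {i}) = 1 := by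
  have := measureReal_preimage_comp μ hξ (fun _ => ()) ()
  have h : ((fun _ => ()) ∘ ξ) ⁻¹' {()} = univ := by ext; simp
  rw [h] at this
  simpa using this.symm

lemma ent_comp_le (μ : Measure X) [IsFiniteMeasure μ] {ξ : X → ι} (hξ : FinMeas ξ) (g : ι → κ) :
    ent μ (g ∘ ξ) ≤ ent μ ξ := by
  classical
  calc ent μ (g ∘ ξ) ≤ ∑ j, ∑ i with g i = j, Real.negMulLog (μ.real (ξ ⁻¹' {i})) := by
        refine Finset.sum_le_sum fun j _ => ?_
        rw [measureReal_preimage_comp μ hξ g j]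
        exact negMulLog_sum_le _ _ fun _ => measureReal_nonneg
    _ = ent μ ξ := Finset.sum_fiberwise _ _ _

lemma ent_le_of_factorsThrough [Nonempty X] (μ : Measure X) [IsFiniteMeasure μ] {ξ : X → ι}
    (hξ : FinMeas ξ) {η : X → κ} (h : ∀ x y, ξ x = ξ y → η x = η y) : ent μ η ≤ ent μ ξ := by
  have : Nonempty κ := ⟨η (Classical.arbitrary X)⟩
  obtain ⟨g, rfl⟩ := (Function.factorsThrough_iff (g := η) (f := ξ)).1 fun x y => h x y
  exact ent_comp_le μ hξ g

/-- Gibbs' inequality. -/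
lemma sum_negMulLog_add_le_log_sum {p b : ι → ℝ} (hp : ∀ i, 0 ≤ p i) (hp1 : ∑ i, p i = 1)
    (hb : ∀ i, 0 ≤ b i) (hpb : ∀ i, 0 < p i → 0 < b i) :
    ∑ i, (Real.negMulLog (p i) + p i * Real.log (b i)) ≤ Real.log (∑ i, b i) := by
  obtain ⟨i₀, hi₀⟩ : ∃ i, 0 < p i := by
    by_contra! h
    have : ∑ i, p i ≤ 0 := Finset.sum_nonpos fun i _ => h i
    linarith
  set B := ∑ i, b i
  have hB : 0 < B := Finset.sum_pos' (fun i _ => hb i) ⟨i₀, Finset.mem_univ _, hpb _ hi₀⟩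
  have key : ∀ i, Real.negMulLog (p i) + p i * Real.log (b i)
      ≤ b i / B - p i + p i * Real.log B := by
    intro i
    rcases (hp i).eq_or_lt with h | h
    · simp only [← h]; simpa using div_nonneg (hb i) hB.le
    · have hbi := hpb i h
      have := Real.log_le_sub_one_of_pos (x := b i / B / p i) (by positivity)
      rw [Real.log_div (by positivity) h.ne', Real.log_div hbi.ne' hB.ne'] at this
      have h2 := mul_le_mul_of_nonneg_left this h.le
      have h3 : p i * (b i / B / p i - 1) = b i / B - p i := by field_simp
      rw [Real.negMulLog]
      nlinarith
  calc _ ≤ ∑ i, (b i / B - p i + p i * Real.log B) := Finset.sum_le_sum fun i _ => key i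
    _ = Real.log B := by
      rw [Finset.sum_add_distrib, Finset.sum_sub_distrib, ← Finset.sum_div, ← Finset.sum_mul, hp1,
        div_self hB.ne']
      ring

lemma ent_le_log_card [Nonempty ι] (μ : Measure X) [IsProbabilityMeasure μ] {ξ : X → ι}
    (hξ : FinMeas ξ) : ent μ ξ ≤ Real.log (Fintype.card ι) := by
  have := sum_negMulLog_add_le_log_sum (b := fun _ => 1) (fun i => measureReal_nonneg)
    (sum_measureReal_preimage μ hξ) (fun _ => zero_le_one) (fun _ _ => zero_lt_one)
  simpa [ent] using this

/-- Strong subadditivity for a nonnegative array. -/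
lemma sum_negMulLog_submodular (p : ι → κ → τ → ℝ) (hp : ∀ a b c, 0 ≤ p a b c) :
    ∑ a, ∑ b, ∑ c, Real.negMulLog (p a b c) + ∑ c, Real.negMulLog (∑ a, ∑ b, p a b c) ≤
      ∑ a, ∑ c, Real.negMulLog (∑ b, p a b c) + ∑ b, ∑ c, Real.negMulLog (∑ a, p a b c) := by
  set r : τ → ℝ := fun c => ∑ a, ∑ b, p a b c with hr
  set u : ι → τ → ℝ := fun a c => ∑ b, p a b c with hu
  set v : κ → τ → ℝ := fun b c => ∑ a, p a b c with hv
  have swap : ∀ g : ι → κ → τ → ℝ, ∑ a, ∑ b, ∑ c, g a b c = ∑ c, ∑ a, ∑ b, g a b c := by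
    intro g
    rw [Finset.sum_comm (s := (Finset.univ : Finset τ))]
    exact Finset.sum_congr rfl fun a _ => Finset.sum_comm
  have hur : ∀ c, ∑ a, u a c = r c := fun c => rfl
  have hvr : ∀ c, ∑ b, v b c = r c := fun c => Finset.sum_comm
  have hu0 : ∀ a c, 0 ≤ u a c := fun a c => Finset.sum_nonneg fun b _ => hp a b c
  have hv0 : ∀ b c, 0 ≤ v b c := fun b c => Finset.sum_nonneg fun a _ => hp a b c
  have hr0 : ∀ c, 0 ≤ r c := fun c => Finset.sum_nonneg fun a _ => hu0 a c
  have key : ∀ a b c, -(p a b c * Real.log (p a b c)) + p a b c * Real.log (u a c)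
      + p a b c * Real.log (v b c) - p a b c * Real.log (r c)
      ≤ u a c * v b c / r c - p a b c := by
    intro a b c
    rcases (hp a b c).eq_or_lt with h | h
    · simp only [← h]
      simpa using div_nonneg (mul_nonneg (hu0 a c) (hv0 b c)) (hr0 c)
    · have h1 : 0 < u a c :=
        h.trans_le (Finset.single_le_sum (fun b _ => hp a b c) (Finset.mem_univ b))
      have h2 : 0 < v b c :=
        h.trans_le (Finset.single_le_sum (f := fun a => p a b c) (fun a _ => hp a b c)
          (Finset.mem_univ a))
      have h3 : 0 < r c :=
        h1.trans_le (Finset.single_le_sum (f := fun a => u a c) (fun a _ => hu0 a c)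
          (Finset.mem_univ a))
      have := Real.log_le_sub_one_of_pos (x := u a c * v b c / r c / p a b c) (by positivity)
      rw [Real.log_div (by positivity) h.ne', Real.log_div (by positivity) h3.ne',
        Real.log_mul h1.ne' h2.ne'] at this
      have h4 := mul_le_mul_of_nonneg_left this h.le
      have h5 : p a b c * (u a c * v b c / r c / p a b c - 1) = u a c * v b c / r c - p a b c := by
        field_simp
      nlinarith
  have hsum : ∑ a, ∑ b, ∑ c, (u a c * v b c / r c - p a b c) = 0 := by
    have e1 : ∑ a, ∑ b, ∑ c, u a c * v b c / r c = ∑ c, r c := by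
      rw [swap]
      refine Finset.sum_congr rfl fun c _ => ?_
      simp_rw [← Finset.sum_div, ← Finset.mul_sum, ← Finset.sum_mul, hur, hvr]
      rcases (hr0 c).eq_or_lt with h | h
      · simp [← h]
      · field_simp
    have e2 : ∑ a, ∑ b, ∑ c, p a b c = ∑ c, r c := swap p
    simp_rw [Finset.sum_sub_distrib]
    rw [e1, e2, sub_self]
  have hle := Finset.sum_le_sum fun a (_ : a ∈ Finset.univ) => Finset.sum_le_sum
    fun b (_ : b ∈ Finset.univ) => Finset.sum_le_sum fun c (_ : c ∈ Finset.univ) => key a b c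
  rw [hsum] at hle
  simp_rw [Finset.sum_sub_distrib, Finset.sum_add_distrib] at hle
  have f1 : ∑ a, ∑ b, ∑ c, p a b c * Real.log (u a c) = ∑ a, ∑ c, u a c * Real.log (u a c) := by
    refine Finset.sum_congr rfl fun a _ => ?_
    rw [Finset.sum_comm]
    exact Finset.sum_congr rfl fun c _ => by rw [← Finset.sum_mul]
  have f2 : ∑ a, ∑ b, ∑ c, p a b c * Real.log (v b c) = ∑ b, ∑ c, v b c * Real.log (v b c) := by
    rw [Finset.sum_comm]
    refine Finset.sum_congr rfl fun b _ => ?_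
    rw [Finset.sum_comm]
    exact Finset.sum_congr rfl fun c _ => by rw [← Finset.sum_mul]
  have f3 : ∑ a, ∑ b, ∑ c, p a b c * Real.log (r c) = ∑ c, r c * Real.log (r c) := by
    rw [swap]
    simp_rw [hr, Finset.sum_mul]
  rw [f1, f2, f3] at hle
  simp only [Real.negMulLog_eq_neg, Finset.sum_neg_distrib] at hle ⊢
  linarith

lemma ent_submodular (μ : Measure X) [IsFiniteMeasure μ] {ξ : X → ι} {η : X → κ} {ζ : X → τ}
    (hξ : FinMeas ξ) (hη : FinMeas η) (hζ : FinMeas ζ) :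
    ent μ (fun x => (ξ x, η x, ζ x)) + ent μ ζ ≤
      ent μ (fun x => (ξ x, ζ x)) + ent μ (fun x => (η x, ζ x)) := by
  classical
  have hm : FinMeas fun x => (ξ x, η x, ζ x) := hξ.prodMk (hη.prodMk hζ)
  have h := sum_negMulLog_submodular
    (fun a b c => μ.real ((fun x => (ξ x, η x, ζ x)) ⁻¹' {(a, b, c)}))
    fun _ _ _ => measureReal_nonneg
  have e3 : ∀ c, μ.real (ζ ⁻¹' {c}) =
      ∑ a, ∑ b, μ.real ((fun x => (ξ x, η x, ζ x)) ⁻¹' {(a, b, c)}) := by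
    intro c
    have := measureReal_preimage_comp μ hm (fun p => p.2.2) c
    simp only [Function.comp_def] at this
    rw [this, Finset.sum_filter, Fintype.sum_prod_type]
    simp [Fintype.sum_prod_type]
  have e1 : ∀ a c, μ.real ((fun x => (ξ x, ζ x)) ⁻¹' {(a, c)}) =
      ∑ b, μ.real ((fun x => (ξ x, η x, ζ x)) ⁻¹' {(a, b, c)}) := by
    intro a c
    have := measureReal_preimage_comp μ hm (fun p => (p.1, p.2.2)) (a, c)
    simp only [Function.comp_def] at this
    rw [this, Finset.sum_filter, Fintype.sum_prod_type]
    simp [Fintype.sum_prod_type, Prod.ext_iff, ite_and]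
  have e2 : ∀ b c, μ.real ((fun x => (η x, ζ x)) ⁻¹' {(b, c)}) =
      ∑ a, μ.real ((fun x => (ξ x, η x, ζ x)) ⁻¹' {(a, b, c)}) := by
    intro b c
    have := measureReal_preimage_comp μ hm (fun p => p.2) (b, c)
    simp only [Function.comp_def] at this
    rw [this, Finset.sum_filter, Fintype.sum_prod_type]
    simp
  simp only [ent, Fintype.sum_prod_type, e1, e2, e3]
  exact h

lemma ent_prodMk_le (μ : Measure X) [IsProbabilityMeasure μ] {ξ : X → ι} {η : X → κ}
    (hξ : FinMeas ξ) (hη : FinMeas η) :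
    ent μ (fun x => (ξ x, η x)) ≤ ent μ ξ + ent μ η := by
  have h := ent_submodular μ hξ hη (FinMeas.const ())
  have h1 := ent_comp_le μ (hξ.prodMk (hη.prodMk (FinMeas.const ()))) fun p => (p.1, p.2.1)
  have h2 := ent_comp_le μ hξ fun a => (a, ())
  have h3 := ent_comp_le μ hη fun a => (a, ())
  have h4 := ent_nonneg μ fun _ => ()
  simp only [Function.comp_def] at h1 h2 h3
  linarith

lemma ent_comp_measurePreserving (μ : Measure X) {f : X → X} (hf : MeasurePreserving f μ μ)
    {ξ : X → ι} (hξ : FinMeas ξ) : ent μ (ξ ∘ f) = ent μ ξ := by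
  refine Finset.sum_congr rfl fun i _ => ?_
  rw [preimage_comp, hf.measureReal_preimage (hξ _).nullMeasurableSet]

end Entropy

section ItineraryEntropy

variable {ι κ : Type*}

/-- The integral of a finite-valued function. -/
lemma integral_comp_finMeas [MeasurableSpace X] [Fintype ι] {ξ : X → ι}
    (μ : Measure X) [IsFiniteMeasure μ] (hξ : FinMeas ξ) (h : ι → ℝ) :
    ∫ x, h (ξ x) ∂μ = ∑ i, μ.real (ξ ⁻¹' {i}) * h i := by
  classical
  have : (fun x => h (ξ x)) = fun x => ∑ i, (ξ ⁻¹' {i}).indicator (fun _ => h i) x := by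
    funext x
    simp [indicator_apply]
  rw [this, integral_finsetSum _ fun i _ => (integrable_const _).indicator (hξ _)]
  exact Finset.sum_congr rfl fun i _ => by rw [integral_indicator_const _ (hξ _), smul_eq_mul]

lemma integrable_comp_finMeas [MeasurableSpace X] [Fintype ι] {ξ : X → ι}
    (μ : Measure X) [IsFiniteMeasure μ] (hξ : FinMeas ξ) (h : ι → ℝ) :
    Integrable (fun x => h (ξ x)) μ := by
  classical
  have : (fun x => h (ξ x)) = fun x => ∑ i, (ξ ⁻¹' {i}).indicator (fun _ => h i) x := by
    funext x
    simp [indicator_apply]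
  rw [this]
  exact integrable_finsetSum _ fun i _ => (integrable_const _).indicator (hξ _)

variable [MeasurableSpace X] [Nonempty X] [Fintype ι] [Fintype κ] {f : X → X}
  {ξ : X → ι} {η : X → κ}

lemma ent_itin_mono (μ : Measure X) [IsFiniteMeasure μ] (hf : Measurable f) (hξ : FinMeas ξ)
    {m n : ℕ} (hmn : m ≤ n) : ent μ (itin f ξ m) ≤ ent μ (itin f ξ n) :=
  ent_le_of_factorsThrough μ (hξ.itin hf n) fun _ _ h =>
    funext fun i => congrFun h (Fin.castLE hmn i)

lemma ent_itin_add_le (μ : Measure X) [IsProbabilityMeasure μ] (hf : Measurable f)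
    (hξ : FinMeas ξ) (a b : ℕ) :
    ent μ (itin f ξ (a + b)) ≤ ent μ (itin f ξ a) + ent μ (itin f ξ b ∘ f^[a]) := by
  have ha := hξ.itin hf a
  have hb := (hξ.itin hf b).comp_measurable (hf.iterate a)
  refine le_trans (ent_le_of_factorsThrough μ (ha.prodMk hb) fun x y h => ?_)
    (ent_prodMk_le μ ha hb)
  rw [Prod.mk.injEq] at h
  funext i
  refine Fin.addCases (fun j => congrFun h.1 j) (fun j => ?_) i
  have := congrFun h.2 j
  simp only [itin, Function.comp_apply, ← Function.iterate_add_apply] at this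
  simpa only [itin, Fin.val_natAdd, add_comm a] using this

lemma ent_itin_le (μ : Measure X) [IsProbabilityMeasure μ] (hf : Measurable f) (hξ : FinMeas ξ)
    (n : ℕ) : ent μ (itin f ξ n) ≤ n * Real.log (Fintype.card ι) := by
  have : Nonempty ι := ⟨ξ (Classical.arbitrary X)⟩
  simpa using ent_le_log_card μ (hξ.itin hf n)

lemma ent_itin_blocks_le (μ : Measure X) [IsProbabilityMeasure μ] (hf : Measurable f)
    (hξ : FinMeas ξ) (l q R : ℕ) :
    ent μ (itin f ξ (l + R * q)) ≤
      l * Real.log (Fintype.card ι) + ∑ r ∈ Finset.range R, ent μ (itin f ξ q ∘ f^[l + r * q]) := by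
  induction R with
  | zero =>
    rw [Finset.range_zero, Finset.sum_empty, add_zero]
    exact (ent_itin_mono μ hf hξ (by simp)).trans (ent_itin_le μ hf hξ l)
  | succ R ih =>
    rw [Finset.sum_range_succ, add_mul, one_mul, ← add_assoc]
    linarith [ent_itin_add_le μ hf hξ (l + R * q) q]

/-- Averaging the decompositions of `[0, n)` into blocks of length `q`. -/
lemma mul_ent_itin_le (μ : Measure X) [IsProbabilityMeasure μ] (hf : Measurable f)
    (hξ : FinMeas ξ) {q : ℕ} (hq : 0 < q) (n : ℕ) :
    q * ent μ (itin f ξ n) ≤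
      ∑ i ∈ Finset.range n, ent μ (itin f ξ q ∘ f^[i]) + 2 * q ^ 2 * Real.log (Fintype.card ι) := by
  set L := Real.log (Fintype.card ι)
  have hL : 0 ≤ L := Real.log_natCast_nonneg _
  set R := n / q + 1
  have hR : n ≤ R * q := by
    have := Nat.div_add_mod n q
    have := Nat.mod_lt n hq
    simp only [R, add_mul, one_mul]
    nlinarith
  have hR' : R * q ≤ n + q := by
    have := Nat.div_mul_le_self n q
    simp only [R, add_mul, one_mul]
    omega
  set u : ℕ → ℝ := fun i => ent μ (itin f ξ q ∘ f^[i])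
  have hu : ∀ i, u i ≤ q * L := by
    intro i
    have : Nonempty ι := ⟨ξ (Classical.arbitrary X)⟩
    simpa using ent_le_log_card μ ((hξ.itin hf q).comp_measurable (hf.iterate i))
  have h1 : ∀ l ∈ Finset.range q, ent μ (itin f ξ n) ≤
      q * L + ∑ r ∈ Finset.range R, u (l + r * q) := by
    intro l hl
    have hlq : (l : ℝ) * L ≤ q * L :=
      mul_le_mul_of_nonneg_right (by exact_mod_cast (Finset.mem_range.1 hl).le) hL
    have := ent_itin_mono μ hf hξ (hR.trans (Nat.le_add_left _ l))
    linarith [ent_itin_blocks_le μ hf hξ l q R]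
  have h2 := Finset.sum_le_sum h1
  rw [Finset.sum_add_distrib, Finset.sum_const, Finset.sum_const, Finset.card_range,
    nsmul_eq_mul, nsmul_eq_mul, Finset.sum_comm] at h2
  have h3 : ∀ R : ℕ, ∑ r ∈ Finset.range R, ∑ l ∈ Finset.range q, u (l + r * q) =
      ∑ i ∈ Finset.range (R * q), u i := by
    intro R
    induction R with
    | zero => simp
    | succ R ih =>
      rw [Finset.sum_range_succ, ih, add_mul, one_mul, Finset.sum_range_add]
      simp only [add_comm]
  rw [h3] at h2
  have h4 : ∑ i ∈ Finset.range (R * q), u i ≤ ∑ i ∈ Finset.range n, u i + q * (q * L) := by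
    rw [← Finset.sum_range_add_sum_Ico _ hR]
    gcongr
    refine (Finset.sum_le_card_nsmul _ _ _ fun i _ => hu i).trans ?_
    rw [nsmul_eq_mul, Nat.card_Ico]
    gcongr
    omega
  nlinarith

/-- The conditional entropy of itineraries grows at most linearly. -/
lemma ent_itin_prodMk_le (μ : Measure X) [IsProbabilityMeasure μ] (hf : MeasurePreserving f μ μ)
    (hξ : FinMeas ξ) (hη : FinMeas η) (n : ℕ) :
    ent μ (fun x => (itin f ξ n x, itin f η n x)) ≤
      ent μ (itin f η n) + n * (ent μ (fun x => (ξ x, η x)) - ent μ η) := by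
  induction n with
  | zero =>
    have := ent_le_of_factorsThrough μ (hη.itin hf.measurable 0)
      (η := fun x => (itin f ξ 0 x, itin f η 0 x)) fun x y _ =>
        Prod.ext (Subsingleton.elim _ _) (Subsingleton.elim _ _)
    simpa using this
  | succ n ih =>
    have hfn := hf.measurable.iterate n
    have hA := hξ.itin hf.measurable n
    have hB := hη.itin hf.measurable n
    have ha := hξ.comp_measurable hfn
    have hb := hη.comp_measurable hfn
    have s1 := ent_submodular μ hA ha (hB.prodMk hb)
    have s2 := ent_submodular μ hA hb hB
    have s3 := ent_submodular μ ha hB hb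
    have e1 : ent μ (fun x => (itin f ξ (n + 1) x, itin f η (n + 1) x)) ≤
        ent μ (fun x => (itin f ξ n x, (ξ ∘ f^[n]) x, itin f η n x, (η ∘ f^[n]) x)) := by
      refine ent_le_of_factorsThrough μ (hA.prodMk (ha.prodMk (hB.prodMk hb))) fun x y h => ?_
      simp only [Prod.mk.injEq, Function.comp_apply] at h
      refine Prod.ext (funext fun i => ?_) (funext fun i => ?_)
      · exact Fin.lastCases h.2.1 (fun j => congrFun h.1 j) i
      · exact Fin.lastCases h.2.2.2 (fun j => congrFun h.2.2.1 j) i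
    have e2 : ent μ (fun x => (itin f η n x, (η ∘ f^[n]) x)) ≤ ent μ (itin f η (n + 1)) := by
      refine ent_le_of_factorsThrough μ (hη.itin hf.measurable _) fun x y h => ?_
      refine Prod.ext (funext fun i => congrFun h i.castSucc) (congrFun h (Fin.last n))
    have e3 : ent μ (fun x => (itin f ξ n x, itin f η n x, (η ∘ f^[n]) x)) ≤
        ent μ (fun x => (itin f ξ n x, (η ∘ f^[n]) x, itin f η n x)) :=
      ent_le_of_factorsThrough μ (hA.prodMk (hb.prodMk hB)) fun x y h => by
        simp only [Prod.mk.injEq] at h ⊢; tauto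
    have e4 : ent μ (fun x => ((η ∘ f^[n]) x, itin f η n x)) ≤
        ent μ (fun x => (itin f η n x, (η ∘ f^[n]) x)) :=
      ent_le_of_factorsThrough μ (hB.prodMk hb) fun x y h => by
        simp only [Prod.mk.injEq] at h ⊢; tauto
    have i1 := ent_comp_measurePreserving μ (hf.iterate n) (hξ.prodMk hη)
    have i2 := ent_comp_measurePreserving μ (hf.iterate n) hη
    simp only [Function.comp_def] at *
    push_cast
    linarith

/-- Itineraries of `f` seen as itineraries of `f^[N]` through blocks of length `N`. -/
lemma ent_itin_mul_le (μ : Measure X) [IsFiniteMeasure μ] (hf : Measurable f) (hξ : FinMeas ξ)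
    (n N : ℕ) : ent μ (itin f ξ (n * N)) ≤ ent μ (itin f^[N] (itin f ξ N) n) := by
  refine ent_le_of_factorsThrough μ ((hξ.itin hf N).itin (hf.iterate N) n) fun x y h => ?_
  funext i
  have hN : 0 < N := Nat.pos_of_ne_zero fun h0 => by subst h0; exact i.elim0
  have := congrFun (congrFun h ⟨i / N, Nat.div_lt_of_lt_mul (i.2.trans_eq (mul_comm n N))⟩)
    ⟨i % N, Nat.mod_lt _ hN⟩
  simp only [itin, ← Function.iterate_mul, ← Function.iterate_add_apply] at this
  simpa only [itin, Nat.mod_add_div] using this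

end ItineraryEntropy

section Bowen

lemma birkhoff_iterate (f : X → X) (g : X → ℝ) (n N : ℕ) (x : X) :
    birkhoff f^[N] (birkhoff f g N) n x = birkhoff f g (n * N) x := by
  induction n with
  | zero => simp [birkhoff]
  | succ n ih =>
    rw [birkhoff, Finset.sum_range_succ, ← birkhoff, ih, add_mul, one_mul, birkhoff, birkhoff,
      birkhoff, Finset.sum_range_add]
    congr 1
    refine Finset.sum_congr rfl fun i _ => ?_
    rw [← Function.iterate_mul, ← Function.iterate_add_apply, mul_comm N, add_comm i]

variable [MetricSpace X] {f : X → X} {φ g : X → ℝ}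

lemma dist_iterate_le_dynDist (f : X → X) {n i : ℕ} (hi : i < n) (x y : X) :
    dist (f^[i] x) (f^[i] y) ≤ dynDist f n x y :=
  le_ciSup (f := fun i : Fin n => dist (f^[(i : ℕ)] x) (f^[(i : ℕ)] y))
    (Set.finite_range _).bddAbove ⟨i, hi⟩

lemma dynDist_le_of_forall {n : ℕ} {ε : ℝ} (hε : 0 ≤ ε) {x y : X}
    (h : ∀ i < n, dist (f^[i] x) (f^[i] y) ≤ ε) : dynDist f n x y ≤ ε :=
  Real.iSup_le (fun i => h i i.2) hε

lemma dynDist_comm (f : X → X) (n : ℕ) (x y : X) : dynDist f n x y = dynDist f n y x := by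
  simp only [dynDist, dist_comm]

lemma dynDist_self (f : X → X) (n : ℕ) (x : X) : dynDist f n x x = 0 := by
  simp [dynDist]

lemma dynDist_nonneg (f : X → X) (n : ℕ) (x y : X) : 0 ≤ dynDist f n x y :=
  Real.iSup_nonneg fun _ => dist_nonneg

lemma dynDist_iterate_le (f : X → X) (n N : ℕ) (hN : 0 < N) (x y : X) :
    dynDist f^[N] n x y ≤ dynDist f (n * N) x y := by
  refine dynDist_le_of_forall (dynDist_nonneg ..) fun i hi => ?_
  rw [← Function.iterate_mul]
  exact dist_iterate_le_dynDist f (by rw [mul_comm]; gcongr) x y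

lemma continuous_birkhoff (hf : Continuous f) (hg : Continuous g) (n : ℕ) :
    Continuous (birkhoff f g n) := by
  unfold birkhoff
  exact continuous_finsetSum _ fun i _ => hg.comp (hf.iterate i)

/-- Birkhoff sums vary slowly along Bowen balls. -/
lemma abs_birkhoff_sub_le {n : ℕ} {ε τ : ℝ} (h : ∀ x y, dist x y ≤ ε → |g x - g y| ≤ τ)
    {x y : X} (hxy : dynDist f n x y ≤ ε) : |birkhoff f g n x - birkhoff f g n y| ≤ n * τ := by
  rw [birkhoff, birkhoff, ← Finset.sum_sub_distrib]
  refine (Finset.abs_sum_le_sum_abs _ _).trans ?_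
  refine (Finset.sum_le_card_nsmul _ _ τ fun i hi => h _ _ ?_).trans (by simp)
  exact (dist_iterate_le_dynDist f (Finset.mem_range.1 hi) x y).trans hxy

lemma exists_modulus [CompactSpace X] (hg : Continuous g) {τ : ℝ} (hτ : 0 < τ) :
    ∃ ε > 0, ∀ x y, dist x y ≤ ε → |g x - g y| ≤ τ := by
  obtain ⟨δ, hδ, h⟩ :=
    Metric.uniformContinuous_iff.1 (CompactSpace.uniformContinuous_of_continuous hg) τ hτ
  refine ⟨δ / 2, half_pos hδ, fun x y hxy => ?_⟩
  have := h (a := x) (b := y) (by linarith)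
  exact this.le

variable [CompactSpace X] [MeasurableSpace X] [BorelSpace X]

lemma integrable_of_continuous (μ : Measure X) [IsFiniteMeasure μ] (hg : Continuous g) :
    Integrable g μ :=
  hg.integrable_of_hasCompactSupport (HasCompactSupport.of_compactSpace g)

lemma integral_birkhoff (μ : Measure X) [IsProbabilityMeasure μ] (hf : MeasurePreserving f μ μ)
    (hfc : Continuous f) (hg : Continuous g) (n : ℕ) :
    ∫ x, birkhoff f g n x ∂μ = n * ∫ x, g x ∂μ := by
  simp only [birkhoff]
  rw [integral_finsetSum (f := fun i x => g (f^[i] x)) _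
    fun i _ => integrable_of_continuous μ (hg.comp (hfc.iterate i))]
  have : ∀ i, ∫ x, g (f^[i] x) ∂μ = ∫ x, g x ∂μ := by
    intro i
    have hi := hf.iterate i
    conv_rhs => rw [← hi.map_eq]
    rw [integral_map hi.measurable.aemeasurable hg.aestronglyMeasurable]
  simp [this]

end Bowen

section UpperBound

variable {ι : Type*} [Fintype ι] [MetricSpace X] [CompactSpace X] [MeasurableSpace X]
  [BorelSpace X] {f : X → X} {g : X → ℝ} {ξ : X → ι}

/-- A finite partition is approximated in entropy by one whose cells, but one, are separated. -/
lemma exists_separated_approx (μ : Measure X) [IsProbabilityMeasure μ] (hξ : FinMeas ξ) :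
    ∃ η : X → Option ι, FinMeas η ∧ ent μ (fun x => (ξ x, η x)) - ent μ η ≤ 1 ∧
      ∃ ε > 0, ∀ x y i j, η x = some i → η y = some j → dist x y ≤ ε → i = j := by
  classical
  have hc : Tendsto Real.negMulLog (𝓝 0) (𝓝 0) := by
    simpa using Real.continuous_negMulLog.tendsto 0
  set b : ℝ := 1 / (Fintype.card ι + 1) with hb
  have hb0 : 0 < b := by positivity
  obtain ⟨δ, hδ, hδ'⟩ := Metric.tendsto_nhds_nhds.1 hc b hb0
  choose K hKs hKc hKm using fun i => (hξ {i}).exists_isCompact_sdiff_lt (μ := μ)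
    (measure_ne_top μ _) (ε := ENNReal.ofReal δ) (by simpa using hδ)
  set η : X → Option ι := fun x => if x ∈ K (ξ x) then some (ξ x) else none with hη
  have hηs : ∀ x i, η x = some i ↔ x ∈ K i := by
    intro x i
    simp only [hη]
    constructor
    · intro h
      split_ifs at h with h1
      rw [Option.some.injEq] at h
      rwa [h] at h1
    · intro h
      have : ξ x = i := hKs i h
      rw [this, if_pos h]
  have hηm : FinMeas η := by
    have hsome : ∀ i, MeasurableSet (η ⁻¹' {some i}) := by
      intro i
      have : η ⁻¹' {some i} = K i := by ext x; simp [hηs]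
      rw [this]
      exact (hKc i).measurableSet
    refine .of_singleton fun o => ?_
    cases o with
    | some i => exact hsome i
    | none =>
      have : η ⁻¹' {none} = (⋃ i, η ⁻¹' {some i})ᶜ := by
        ext x
        simp [Option.eq_none_iff_forall_ne_some]
      rw [this]
      exact (MeasurableSet.iUnion hsome).compl
  refine ⟨η, hηm, ?_, ?_⟩
  · have h1 : ∀ i, ∑ j, Real.negMulLog
        (μ.real ((fun x => (ξ x, η x)) ⁻¹' {(i, some j)})) =
        Real.negMulLog (μ.real (η ⁻¹' {some i})) := by
      intro i
      rw [Finset.sum_eq_single i]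
      · congr 2
        ext x
        simp only [mem_preimage, mem_singleton_iff, Prod.mk.injEq, hηs, and_iff_right_iff_imp]
        exact fun h => hKs i h
      · intro j _ hj
        have : (fun x => (ξ x, η x)) ⁻¹' {(i, some j)} = ∅ := by
          ext x
          simp only [mem_preimage, mem_singleton_iff, Prod.mk.injEq, hηs, mem_empty_iff_false,
            iff_false, not_and]
          intro h1 h2
          exact hj ((show ξ x = j from hKs j h2).symm.trans h1)
        simp [this]
      · simp
    have h2 : ∀ i, Real.negMulLog (μ.real ((fun x => (ξ x, η x)) ⁻¹' {(i, none)})) ≤ b := by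
      intro i
      have e : (fun x => (ξ x, η x)) ⁻¹' {(i, none)} ⊆ ξ ⁻¹' {i} \ K i := by
        intro x hx
        simp only [mem_preimage, mem_singleton_iff, Prod.mk.injEq] at hx
        refine ⟨hx.1, fun hk => ?_⟩
        rw [(hηs x i).2 hk] at hx
        simp at hx
      have e2 : μ.real ((fun x => (ξ x, η x)) ⁻¹' {(i, none)}) < δ := by
        refine (ENNReal.toReal_lt_of_lt_ofReal ((measure_mono e).trans_lt (hKm i)))
      have := hδ' (x := μ.real ((fun x => (ξ x, η x)) ⁻¹' {(i, none)})) (by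
        rw [Real.dist_eq, sub_zero, abs_of_nonneg measureReal_nonneg]; exact e2)
      rw [Real.dist_eq, sub_zero] at this
      exact (le_abs_self _).trans this.le
    have h3 : 0 ≤ Real.negMulLog (μ.real (η ⁻¹' {none})) :=
      Real.negMulLog_nonneg measureReal_nonneg measureReal_le_one
    have h4 : ∑ i : ι, Real.negMulLog (μ.real ((fun x => (ξ x, η x)) ⁻¹' {(i, none)})) ≤ 1 := by
      refine (Finset.sum_le_card_nsmul _ _ b fun i _ => h2 i).trans ?_
      rw [nsmul_eq_mul, Finset.card_univ, hb, mul_one_div, div_le_one (by positivity)]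
      linarith
    simp only [ent, Fintype.sum_prod_type, Fintype.sum_option, h1, Finset.sum_add_distrib]
    linarith
  · have hsep : ∀ i j, i ≠ j → ∀ᶠ ε in 𝓝[>] (0 : ℝ), ∀ x ∈ K i, ∀ y ∈ K j, ε < dist x y := by
      intro i j hij
      have hd : Disjoint (K i) (K j) := by
        refine Set.disjoint_left.2 fun x hi hj => hij ?_
        exact (show ξ x = i from hKs i hi).symm.trans (hKs j hj)
      obtain ⟨r, hr, h⟩ := Metric.exists_pos_forall_lt_edist (hKc i) (hKc j).isClosed hd
      filter_upwards [Ioo_mem_nhdsGT (show (0 : ℝ) < r from hr)] with ε hε x hx y hy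
      have := h x hx y hy
      rw [edist_nndist, ENNReal.coe_lt_coe, ← NNReal.coe_lt_coe, coe_nndist] at this
      exact hε.2.trans this
    have hall : ∀ᶠ ε in 𝓝[>] (0 : ℝ), ∀ i j, i ≠ j → ∀ x ∈ K i, ∀ y ∈ K j, ε < dist x y := by
      simp only [eventually_all]
      exact hsep
    obtain ⟨ε, hε, hε0⟩ := (hall.and self_mem_nhdsWithin).exists
    refine ⟨ε, hε0, fun x y i j hx hy hxy => ?_⟩
    by_contra hij
    exact absurd hxy (not_le.2 (hε i j hij x ((hηs x i).1 hx) y ((hηs y j).1 hy)))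

variable [Nonempty X]

/-- Entropy plus integral is bounded by the growth of spanning sums, up to a constant. -/
lemma exists_ent_itin_add_integral_le (μ : Measure X) [IsProbabilityMeasure μ]
    (hf : MeasurePreserving f μ μ) (hfc : Continuous f) (hg : Continuous g) (hξ : FinMeas ξ)
    (hspan : ∀ ε > 0, ∀ᶠ n : ℕ in atTop, ∃ F : Finset X, IsSpanningSet f n ε univ F ∧
      ∑ x ∈ F, Real.exp (birkhoff f g n x) ≤ 1) :
    ∃ n : ℕ, 0 < n ∧ ent μ (itin f ξ n) + n * ∫ x, g x ∂μ ≤ n * (Real.log 2 + 2) := by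
  classical
  obtain ⟨η, hη, hent, ε₁, hε₁, hsep⟩ := exists_separated_approx μ hξ
  obtain ⟨ε₂, hε₂, hmod⟩ := exists_modulus hg one_pos
  set ε := min (ε₁ / 2) ε₂
  have hε : 0 < ε := lt_min (half_pos hε₁) hε₂
  obtain ⟨n, ⟨F, hF, hFsum⟩, hn⟩ := ((hspan ε hε).and (eventually_gt_atTop 0)).exists
  refine ⟨n, hn, ?_⟩
  have hηn := hη.itin hf.measurable n
  set N : X → (Fin n → Option ι) → Prop := fun x w =>
    ∃ y, dynDist f n x y ≤ ε ∧ itin f η n y = w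
  set b : (Fin n → Option ι) → ℝ := fun w =>
    ∑ x ∈ F with N x w, Real.exp (birkhoff f g n x + n) with hbdef
  have hb0 : ∀ w, 0 ≤ b w := fun w => Finset.sum_nonneg fun _ _ => (Real.exp_pos _).le
  have hble : ∀ y, Real.exp (birkhoff f g n y) ≤ b (itin f η n y) := by
    intro y
    obtain ⟨x, hx, hxy⟩ := hF y (mem_univ y)
    have h1 : Real.exp (birkhoff f g n y) ≤ Real.exp (birkhoff f g n x + n) := by
      have := abs_birkhoff_sub_le (f := f) (n := n) hmod (hxy.trans (min_le_right _ _))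
      rw [abs_le] at this
      exact Real.exp_le_exp.2 (by linarith)
    exact h1.trans (Finset.single_le_sum (f := fun x => Real.exp (birkhoff f g n x + n))
      (fun _ _ => (Real.exp_pos _).le) (Finset.mem_filter.2 ⟨hx, y, hxy, rfl⟩))
  have hbpos : ∀ w, 0 < μ.real (itin f η n ⁻¹' {w}) → 0 < b w := by
    intro w hw
    obtain ⟨y, hy⟩ : (itin f η n ⁻¹' {w}).Nonempty := by
      by_contra h
      rw [not_nonempty_iff_eq_empty] at h
      simp [h] at hw
    rw [← show itin f η n y = w from hy]
    exact (Real.exp_pos _).trans_le (hble y)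
  have hgibbs := sum_negMulLog_add_le_log_sum (fun _ => measureReal_nonneg)
    (sum_measureReal_preimage μ hηn) hb0 hbpos
  have hgint : n * ∫ x, g x ∂μ ≤ ∑ w, μ.real (itin f η n ⁻¹' {w}) * Real.log (b w) := by
    rw [← integral_birkhoff μ hf hfc hg, ← integral_comp_finMeas μ hηn fun w => Real.log (b w)]
    refine integral_mono (integrable_of_continuous μ (continuous_birkhoff hfc hg n))
      (integrable_comp_finMeas μ hηn fun w => Real.log (b w)) fun y => ?_
    exact (Real.le_log_iff_exp_le ((Real.exp_pos _).trans_le (hble y))).2 (hble y)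
  have hcard : ∀ x, (Finset.univ.filter fun w => N x w).card ≤ 2 ^ n := by
    intro x
    set S : Fin n → Finset (Option ι) := fun i =>
      Finset.univ.filter fun o => ∃ z, dist (f^[i] x) z ≤ ε ∧ η z = o with hS
    have hS2 : ∀ i, (S i).card ≤ 2 := by
      intro i
      have h1 : ((S i).erase none).card ≤ 1 := by
        refine Finset.card_le_one.2 fun o ho o' ho' => ?_
        simp only [hS, Finset.mem_erase, Finset.mem_filter, Finset.mem_univ, true_and] at ho ho'
        obtain ⟨hne, z, hz, rfl⟩ := ho
        obtain ⟨hne', z', hz', rfl⟩ := ho'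
        obtain ⟨j, hj⟩ := Option.ne_none_iff_exists'.1 hne
        obtain ⟨j', hj'⟩ := Option.ne_none_iff_exists'.1 hne'
        rw [hj, hj', hsep z z' j j' hj hj' ?_]
        have := dist_triangle_left z z' (f^[i] x)
        have := min_le_left (ε₁ / 2) ε₂
        linarith
      have := Finset.pred_card_le_card_erase (s := S i) (a := none)
      omega
    calc _ ≤ (Fintype.piFinset S).card := by
          refine Finset.card_le_card fun w hw => ?_
          obtain ⟨y, hy, rfl⟩ := (Finset.mem_filter.1 hw).2
          refine Fintype.mem_piFinset.2 fun i => Finset.mem_filter.2 ⟨Finset.mem_univ _, ?_⟩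
          exact ⟨f^[i] y, (dist_iterate_le_dynDist f i.2 x y).trans hy, rfl⟩
      _ ≤ 2 ^ n := by
          rw [Fintype.card_piFinset]
          exact (Finset.prod_le_pow_card _ _ 2 fun i _ => hS2 i).trans (by simp)
  have hbsum : ∑ w, b w ≤ 2 ^ n * Real.exp n := by
    calc ∑ w, b w = ∑ x ∈ F, ∑ w with N x w, Real.exp (birkhoff f g n x + n) := by
          simp only [hbdef, Finset.sum_filter]
          exact Finset.sum_comm
      _ ≤ ∑ x ∈ F, 2 ^ n * Real.exp n * Real.exp (birkhoff f g n x) := by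
          refine Finset.sum_le_sum fun x _ => ?_
          rw [Finset.sum_const, nsmul_eq_mul, Real.exp_add, mul_assoc, mul_comm (Real.exp n)]
          gcongr
          exact_mod_cast hcard x
      _ ≤ 2 ^ n * Real.exp n * 1 := by
          rw [← Finset.mul_sum]
          gcongr
      _ = _ := mul_one _
  have hlog : Real.log (∑ w, b w) ≤ n * (Real.log 2 + 1) := by
    have e : (n : ℝ) * (Real.log 2 + 1) = Real.log (2 ^ n * Real.exp n) := by
      rw [Real.log_mul (by positivity) (by positivity), Real.log_pow, Real.log_exp]
      ring
    rw [e]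
    refine Real.log_le_log ?_ hbsum
    exact (Real.exp_pos _).trans_le ((hble (Classical.arbitrary X)).trans
      (Finset.single_le_sum (fun w _ => hb0 w) (Finset.mem_univ _)))
  rw [Finset.sum_add_distrib] at hgibbs
  have h5 := ent_itin_prodMk_le μ hf hξ hη n
  have h6 := ent_comp_le μ ((hξ.itin hf.measurable n).prodMk hηn) Prod.fst
  simp only [Function.comp_def] at h6
  have h7 : (n : ℝ) * (ent μ (fun x => (ξ x, η x)) - ent μ η) ≤ n * 1 := by gcongr
  have h8 : ent μ (itin f η n) = ∑ w, Real.negMulLog (μ.real (itin f η n ⁻¹' {w})) := rfl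
  have h9 : ent μ (itin f ξ n) ≤ ent μ fun x => (itin f ξ n x, itin f η n x) := h6
  linarith

/-- If the spanning sums of `g` stay bounded, then `h_μ(f) + ∫ g dμ ≤ 0`. -/
lemma exists_ent_itin_le (μ : Measure X) [IsProbabilityMeasure μ]
    (hf : MeasurePreserving f μ μ) (hfc : Continuous f) (hg : Continuous g) (hξ : FinMeas ξ)
    (hspan : ∀ ε > 0, ∀ᶠ n : ℕ in atTop, ∃ F : Finset X, IsSpanningSet f n ε univ F ∧
      ∑ x ∈ F, Real.exp (birkhoff f g n x) ≤ 1) {δ : ℝ} (hδ : 0 < δ) :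
    ∃ n : ℕ, 0 < n ∧ ent μ (itin f ξ n) ≤ n * (δ - ∫ x, g x ∂μ) := by
  obtain ⟨N, hN⟩ := exists_nat_gt ((Real.log 2 + 2) / δ)
  have hN0 : 0 < N := by
    have : 0 < (Real.log 2 + 2) / δ := by positivity
    exact_mod_cast this.trans hN
  rw [div_lt_iff₀ hδ] at hN
  obtain ⟨n, hn, h⟩ := exists_ent_itin_add_integral_le (f := f^[N]) (g := birkhoff f g N) μ
    (hf.iterate N) (hfc.iterate N) (continuous_birkhoff hfc hg N) (hξ.itin hf.measurable N) (by
      intro ε hε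
      have ht : Tendsto (fun n : ℕ => n * N) atTop atTop :=
        tendsto_id.atTop_mul_const' hN0
      filter_upwards [ht.eventually (hspan ε hε)] with n ⟨F, hF, hs⟩
      refine ⟨F, fun y hy => ?_, by simpa only [birkhoff_iterate] using hs⟩
      obtain ⟨x, hx, hxy⟩ := hF y hy
      exact ⟨x, hx, (dynDist_iterate_le f n N hN0 x y).trans hxy⟩)
  refine ⟨n * N, by positivity, ?_⟩
  have h1 := ent_itin_mul_le μ hf.measurable hξ n N
  rw [integral_birkhoff μ hf hfc hg] at h
  have h2 : (n : ℝ) * (Real.log 2 + 2) ≤ n * (N * δ) := by gcongr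
  push_cast
  linarith

end UpperBound

section NullBoundary

variable {ι : Type*}

lemma frontier_iInter_subset_of_finite [TopologicalSpace X] [Finite ι] (A : ι → Set X) :
    frontier (⋂ i, A i) ⊆ ⋃ i, frontier (A i) := by
  intro x hx
  rw [frontier, interior_iInter_of_finite] at hx
  obtain ⟨i, hi⟩ := by simpa using hx.2
  exact mem_iUnion.2 ⟨i, closure_mono (iInter_subset A i) hx.1, hi⟩

lemma measure_frontier_iInter_eq_zero [TopologicalSpace X] [MeasurableSpace X] [Finite ι]
    (μ : Measure X) {A : ι → Set X} (h : ∀ i, μ (frontier (A i)) = 0) :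
    μ (frontier (⋂ i, A i)) = 0 :=
  measure_mono_null (frontier_iInter_subset_of_finite A) (measure_iUnion_null h)

lemma exists_partition_null_frontier [MetricSpace X] [CompactSpace X] [MeasurableSpace X]
    [BorelSpace X] (μ : Measure X) [IsFiniteMeasure μ] {ε : ℝ} (hε : 0 < ε) :
    ∃ (k : ℕ) (ξ : X → Fin k), FinMeas ξ ∧ (∀ x y, ξ x = ξ y → dist x y ≤ ε) ∧
      ∀ i, μ (frontier (ξ ⁻¹' {i})) = 0 := by
  classical
  choose r hr hnull using fun x : X => exists_null_frontier_thickening μ {x} (half_pos hε)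
  simp only [Metric.thickening_singleton] at hnull
  obtain ⟨t, -, ht⟩ := isCompact_univ.elim_nhds_subcover (fun x => Metric.ball x (r x))
    fun x _ => Metric.ball_mem_nhds x (hr x).1
  set ζ : X → (t → Bool) := fun x c => decide (x ∈ Metric.ball c.1 (r c)) with hζ
  let e := Fintype.equivFin (t → Bool)
  have hcell : ∀ w : t → Bool, ζ ⁻¹' {w} =
      ⋂ c : t, if w c then Metric.ball c.1 (r c) else (Metric.ball c.1 (r c))ᶜ := by
    intro w
    ext x
    simp only [mem_preimage, mem_singleton_iff, funext_iff, mem_iInter, hζ]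
    refine forall_congr' fun c => ?_
    cases w c <;> simp
  have hpre : ∀ i, (e ∘ ζ) ⁻¹' {i} = ζ ⁻¹' {e.symm i} := by
    intro i; ext x; simp [Equiv.eq_symm_apply]
  refine ⟨_, e ∘ ζ, FinMeas.comp_left (.of_singleton fun w => ?_) e, fun x y hxy => ?_,
    fun i => ?_⟩
  · rw [hcell]
    refine .iInter fun c => ?_
    split_ifs
    · exact Metric.isOpen_ball.measurableSet
    · exact Metric.isOpen_ball.measurableSet.compl
  · obtain ⟨c, hc, hxc⟩ := mem_iUnion₂.1 (ht (mem_univ x))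
    have h := congrFun (e.injective hxy) ⟨c, hc⟩
    simp only [hζ, decide_eq_decide] at h
    have h1 := Metric.mem_ball.1 hxc
    have h2 := Metric.mem_ball.1 (h.1 hxc)
    have := dist_triangle_right x y c
    linarith [(hr c).2]
  · rw [hpre, hcell]
    refine measure_frontier_iInter_eq_zero μ fun c => ?_
    split_ifs
    · exact hnull c
    · rw [frontier_compl]; exact hnull c

lemma measure_frontier_itin_eq_zero [TopologicalSpace X] [MeasurableSpace X] [BorelSpace X]
    (μ : Measure X) {f : X → X} (hf : MeasurePreserving f μ μ)
    (hfc : Continuous f) {ξ : X → ι} (h : ∀ i, μ (frontier (ξ ⁻¹' {i})) = 0) {q : ℕ}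
    (w : Fin q → ι) : μ (frontier (itin f ξ q ⁻¹' {w})) = 0 := by
  have : itin f ξ q ⁻¹' {w} = ⋂ i : Fin q, f^[i] ⁻¹' (ξ ⁻¹' {w i}) := by
    ext x; simp [itin, funext_iff]
  rw [this]
  refine measure_frontier_iInter_eq_zero μ fun i => ?_
  refine measure_mono_null ((hfc.iterate i).frontier_preimage_subset _) ?_
  rw [(hf.iterate i).measure_preimage isClosed_frontier.measurableSet.nullMeasurableSet]
  exact h _

end NullBoundary

section Empirical

variable {ι : Type*} [Fintype ι] [MeasurableSpace X] {f : X → X}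

/-- The average of the first `n` push-forwards of `σ`. -/
noncomputable def avgMeasure (f : X → X) (σ : Measure X) (n : ℕ) : Measure X :=
  (n : ENNReal)⁻¹ • ∑ i ∈ Finset.range n, σ.map f^[i]

lemma avgMeasure_real (hf : Measurable f) (σ : Measure X) [IsFiniteMeasure σ] (n : ℕ) {A : Set X}
    (hA : MeasurableSet A) : (avgMeasure f σ n).real A =
      ∑ i ∈ Finset.range n, (n : ℝ)⁻¹ • σ.real (f^[i] ⁻¹' A) := by
  rw [avgMeasure, measureReal_def, Measure.smul_apply, Measure.finsetSum_apply, smul_eq_mul,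
    ENNReal.toReal_mul, ENNReal.toReal_sum fun i _ => ?_, Finset.mul_sum]
  · refine Finset.sum_congr rfl fun i _ => ?_
    rw [Measure.map_apply (hf.iterate i) hA, measureReal_def]
    simp
  · rw [Measure.map_apply (hf.iterate i) hA]
    exact measure_ne_top _ _

lemma isProbabilityMeasure_avgMeasure (hf : Measurable f) (σ : Measure X)
    [IsProbabilityMeasure σ] {n : ℕ} (hn : 0 < n) : IsProbabilityMeasure (avgMeasure f σ n) := by
  constructor
  rw [avgMeasure, Measure.smul_apply, Measure.finsetSum_apply]
  have : ∀ i, (σ.map f^[i]) univ = 1 := fun i => by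
    rw [Measure.map_apply (hf.iterate i) .univ, preimage_univ, measure_univ]
  simp only [this, Finset.sum_const, Finset.card_range, nsmul_eq_mul, mul_one, smul_eq_mul]
  exact ENNReal.inv_mul_cancel (by exact_mod_cast hn.ne') (ENNReal.natCast_ne_top n)

/-- Entropy is concave along averages of push-forwards. -/
lemma sum_ent_le_ent_avgMeasure (hf : Measurable f) (σ : Measure X) [IsProbabilityMeasure σ]
    {n : ℕ} (hn : 0 < n) {η : X → ι} (hη : FinMeas η) :
    ∑ i ∈ Finset.range n, ent σ (η ∘ f^[i]) ≤ n * ent (avgMeasure f σ n) η := by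
  have hn' : (0 : ℝ) < n := by exact_mod_cast hn
  have h : ∀ c, ∑ i ∈ Finset.range n, (n : ℝ)⁻¹ • Real.negMulLog (σ.real ((η ∘ f^[i]) ⁻¹' {c})) ≤
      Real.negMulLog ((avgMeasure f σ n).real (η ⁻¹' {c})) := by
    intro c
    rw [avgMeasure_real hf σ n (hη _)]
    refine Real.concaveOn_negMulLog.le_map_sum (fun _ _ => by positivity) ?_
      fun _ _ => measureReal_nonneg
    simp [hn'.ne']
  have h2 := Finset.sum_le_sum fun c (_ : c ∈ Finset.univ) => h c
  rw [Finset.sum_comm] at h2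
  simp_rw [← Finset.smul_sum, smul_eq_mul] at h2
  rwa [inv_mul_le_iff₀ hn'] at h2

variable [MetricSpace X] [CompactSpace X] [BorelSpace X]

lemma integral_avgMeasure (hf : Continuous f) (σ : Measure X) [IsProbabilityMeasure σ]
    {n : ℕ} (hn : 0 < n) {h : X → ℝ} (hh : Continuous h) :
    n * ∫ x, h x ∂(avgMeasure f σ n) = ∫ x, birkhoff f h n x ∂σ := by
  have hn' : (0 : ℝ) < n := by exact_mod_cast hn
  have hm : ∀ i : ℕ, IsProbabilityMeasure (σ.map f^[i]) := fun i =>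
    Measure.isProbabilityMeasure_map (hf.iterate i).measurable.aemeasurable
  simp only [birkhoff]
  rw [avgMeasure, integral_smul_measure,
    integral_finsetSum_measure fun i _ => integrable_of_continuous _ hh,
    integral_finsetSum (f := fun i x => h (f^[i] x)) _
      fun i _ => integrable_of_continuous σ (hh.comp (hf.iterate i))]
  simp only [ENNReal.toReal_inv, ENNReal.toReal_natCast, smul_eq_mul]
  rw [mul_inv_cancel_left₀ hn'.ne']
  refine Finset.sum_congr rfl fun i _ => ?_
  rw [integral_map (hf.iterate i).measurable.aemeasurable hh.aestronglyMeasurable]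

/-- Gibbs weights on a separated set yield an almost invariant measure of large entropy. -/
lemma exists_empirical [Nonempty X] (hf : Continuous f) {g : X → ℝ} (hg : Continuous g) {n : ℕ}
    (hn : 0 < n) {ε : ℝ} (hε : 0 ≤ ε) {E : Finset X} (hE : E.Nonempty)
    (hsep : IsSeparatedSet f n ε E) :
    ∃ ν : ProbabilityMeasure X,
      (∀ (h : X → ℝ) (C : ℝ), Continuous h → (∀ x, |h x| ≤ C) →
        |∫ x, h (f x) ∂(ν : Measure X) - ∫ x, h x ∂(ν : Measure X)| ≤ 2 * C / n) ∧
      ∀ (k : ℕ) (ξ : X → Fin k), FinMeas ξ → (∀ x y, ξ x = ξ y → dist x y ≤ ε) → ∀ q : ℕ, 0 < q →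
        q * (Real.log (∑ x ∈ E, Real.exp (birkhoff f g n x)) - n * ∫ x, g x ∂(ν : Measure X)) ≤
          n * ent (ν : Measure X) (itin f ξ q) + 2 * q ^ 2 * Real.log k := by
  classical
  have hn' : (0 : ℝ) < n := by exact_mod_cast hn
  set Z := ∑ x ∈ E, Real.exp (birkhoff f g n x) with hZdef
  have hZ : 0 < Z := Finset.sum_pos (fun _ _ => Real.exp_pos _) hE
  set w : X → ℝ := fun x => Real.exp (birkhoff f g n x) / Z with hw
  have hw0 : ∀ x, 0 ≤ w x := fun x => by positivity
  have hw1 : ∑ x ∈ E, w x = 1 := by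
    rw [← Finset.sum_div, div_self hZ.ne']
  set σ : Measure X := ∑ x ∈ E, ENNReal.ofReal (w x) • Measure.dirac x with hσ
  have hσp : IsProbabilityMeasure σ := by
    constructor
    rw [hσ, Measure.finsetSum_apply]
    simp only [Measure.smul_apply, measure_univ, smul_eq_mul, mul_one]
    rw [← ENNReal.ofReal_sum_of_nonneg fun x _ => hw0 x, hw1, ENNReal.ofReal_one]
  have hσint : ∀ h : X → ℝ, Continuous h → ∫ x, h x ∂σ = ∑ x ∈ E, w x * h x := by
    intro h hh
    rw [hσ, integral_finsetSum_measure fun x _ =>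
      (integrable_of_continuous _ hh).smul_measure ENNReal.ofReal_ne_top]
    refine Finset.sum_congr rfl fun x _ => ?_
    rw [integral_smul_measure, integral_dirac, ENNReal.toReal_ofReal (hw0 x), smul_eq_mul]
  have hσreal : ∀ A, MeasurableSet A → σ.real A = ∑ x ∈ E with x ∈ A, w x := by
    intro A hA
    rw [hσ, measureReal_def, Measure.finsetSum_apply, ENNReal.toReal_sum fun x _ => ?_,
      Finset.sum_filter]
    · refine Finset.sum_congr rfl fun x _ => ?_
      rw [Measure.smul_apply, Measure.dirac_apply' _ hA]
      by_cases hx : x ∈ A <;> simp [hx, hw0 x]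
    · exact ENNReal.mul_ne_top ENNReal.ofReal_ne_top (measure_ne_top _ _)
  have hνp := isProbabilityMeasure_avgMeasure hf.measurable σ hn
  refine ⟨⟨avgMeasure f σ n, hνp⟩, fun h C hh hC => ?_, fun k ξ hξ hdiam q hq => ?_⟩
  · change |∫ x, h (f x) ∂(avgMeasure f σ n) - ∫ x, h x ∂(avgMeasure f σ n)| ≤ _
    have h1 := integral_avgMeasure hf σ hn (hh.comp hf)
    have h2 := integral_avgMeasure hf σ hn hh
    have hsub : ∀ x, birkhoff f (h ∘ f) n x - birkhoff f h n x = h (f^[n] x) - h x := by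
      intro x
      simp only [birkhoff, ← Finset.sum_sub_distrib, Function.comp_apply,
        ← Function.iterate_succ_apply' f]
      rw [Finset.sum_range_sub fun i => h (f^[i] x)]
      rfl
    have h3 : n * (∫ x, h (f x) ∂(avgMeasure f σ n) - ∫ x, h x ∂(avgMeasure f σ n)) =
        ∫ x, (h (f^[n] x) - h x) ∂σ := by
      rw [mul_sub, h2, ← integral_congr_ae (ae_of_all _ hsub), integral_sub
        (integrable_of_continuous σ (continuous_birkhoff hf (hh.comp hf) n))
        (integrable_of_continuous σ (continuous_birkhoff hf hh n)), ← h1]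
      rfl
    have h4 : |∫ x, (h (f^[n] x) - h x) ∂σ| ≤ 2 * C := by
      have := norm_integral_le_of_norm_le_const (μ := σ) (f := fun x => h (f^[n] x) - h x)
        (C := 2 * C) (ae_of_all _ fun x => by
          rw [Real.norm_eq_abs]
          exact (abs_sub _ _).trans (by linarith [hC x, hC (f^[n] x)]))
      simpa using this
    rw [← h3, abs_mul, abs_of_pos hn'] at h4
    rw [le_div_iff₀ hn']
    linarith
  · change (q : ℝ) * (Real.log Z - n * ∫ x, g x ∂(avgMeasure f σ n)) ≤
      n * ent (avgMeasure f σ n) (itin f ξ q) + _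
    rw [integral_avgMeasure hf σ hn hg]
    have hinj : Set.InjOn (itin f ξ n) E := by
      intro x hx y hy hxy
      by_contra hne
      refine absurd (hsep x hx y hy hne) (not_lt.2 (dynDist_le_of_forall hε fun i hi => ?_))
      exact hdiam _ _ (congrFun hxy ⟨i, hi⟩)
    have hlow : Real.log Z - ∫ x, birkhoff f g n x ∂σ ≤ ent σ (itin f ξ n) := by
      have e1 : Real.log Z - ∫ x, birkhoff f g n x ∂σ = ∑ x ∈ E, Real.negMulLog (w x) := by
        rw [hσint _ (continuous_birkhoff hf hg n)]
        have : ∀ x, Real.negMulLog (w x) = w x * Real.log Z - w x * birkhoff f g n x := by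
          intro x
          rw [Real.negMulLog, hw, Real.log_div (Real.exp_pos _).ne' hZ.ne', Real.log_exp]
          ring
        simp only [this]
        rw [Finset.sum_sub_distrib, ← Finset.sum_mul, hw1, one_mul]
      have e2 : ∀ x ∈ E, Real.negMulLog (w x) =
          Real.negMulLog (σ.real (itin f ξ n ⁻¹' {itin f ξ n x})) := by
        intro x hx
        rw [hσreal _ (hξ.itin hf.measurable n _)]
        congr 1
        symm
        refine Finset.sum_eq_single_of_mem x (by simpa using hx) fun y hy hyx => ?_
        rw [Finset.mem_filter] at hy
        exact absurd (hinj hy.1 hx hy.2) hyx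
      rw [e1, Finset.sum_congr rfl e2,
        ← Finset.sum_image (f := fun v => Real.negMulLog (σ.real (itin f ξ n ⁻¹' {v}))) hinj]
      exact Finset.sum_le_sum_of_subset_of_nonneg (Finset.subset_univ _) fun _ _ _ =>
        Real.negMulLog_nonneg measureReal_nonneg measureReal_le_one
    have h1 := mul_ent_itin_le σ hf.measurable hξ hq n
    have h2 := sum_ent_le_ent_avgMeasure hf.measurable σ hn (hξ.itin hf.measurable q)
    have h3 : (q : ℝ) * (Real.log Z - ∫ x, birkhoff f g n x ∂σ) ≤ q * ent σ (itin f ξ n) := by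
      gcongr
    rw [Fintype.card_fin] at h1
    linarith

/-- Misiurewicz's construction: separated sets with large weight produce an invariant measure
with `h_μ(f) + ∫ g dμ ≥ 0`. -/
lemma exists_invariant_measure [Nonempty X] (hf : Continuous f) {g : X → ℝ} (hg : Continuous g)
    {ε : ℝ} (hε : 0 < ε) (n : ℕ → ℕ) (hn : Tendsto n atTop atTop) (E : ℕ → Finset X)
    (hE : ∀ j, (E j).Nonempty) (hsep : ∀ j, IsSeparatedSet f (n j) ε (E j))
    (hZ : ∀ δ > 0, ∀ᶠ j in atTop,
      -(δ * n j) ≤ Real.log (∑ x ∈ E j, Real.exp (birkhoff f g (n j) x))) :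
    ∃ μ : Measure X, IsProbabilityMeasure μ ∧ MeasurePreserving f μ μ ∧
      ∃ (k : ℕ) (ξ : X → Fin k), FinMeas ξ ∧
        ∀ q : ℕ, -(q * ∫ x, g x ∂μ) ≤ ent μ (itin f ξ q) := by
  have hex : ∀ j, ∃ ν : ProbabilityMeasure X, 0 < n j →
      (∀ (h : X → ℝ) (C : ℝ), Continuous h → (∀ x, |h x| ≤ C) →
        |∫ x, h (f x) ∂(ν : Measure X) - ∫ x, h x ∂(ν : Measure X)| ≤ 2 * C / n j) ∧
      ∀ (k : ℕ) (ξ : X → Fin k), FinMeas ξ → (∀ x y, ξ x = ξ y → dist x y ≤ ε) → ∀ q : ℕ, 0 < q →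
        q * (Real.log (∑ x ∈ E j, Real.exp (birkhoff f g (n j) x)) -
          n j * ∫ x, g x ∂(ν : Measure X)) ≤
          n j * ent (ν : Measure X) (itin f ξ q) + 2 * q ^ 2 * Real.log k := by
    intro j
    by_cases hj : 0 < n j
    · obtain ⟨ν, hν⟩ := exists_empirical hf hg hj hε.le (hE j) (hsep j)
      exact ⟨ν, fun _ => hν⟩
    · exact ⟨⟨Measure.dirac (Classical.arbitrary X), inferInstance⟩, fun h => absurd h hj⟩
  choose ν hν using hex
  set U : Ultrafilter ℕ := hyperfilter ℕ
  have hU : (U : Filter ℕ) ≤ atTop := Nat.hyperfilter_le_atTop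
  obtain ⟨μ, -, hμ⟩ := isCompact_univ.ultrafilter_le_nhds (U.map ν) (by simp)
  have hlim : Tendsto ν U (𝓝 μ) := hμ
  have hnU : Tendsto (fun j => (n j : ℝ)) U atTop :=
    (tendsto_natCast_atTop_atTop.comp hn).mono_left hU
  have hpos : ∀ᶠ j in (U : Filter ℕ), 0 < n j := hU (hn.eventually_gt_atTop 0)
  have hgint : ∀ h : X → ℝ, Continuous h →
      Tendsto (fun j => ∫ x, h x ∂(ν j : Measure X)) U (𝓝 (∫ x, h x ∂(μ : Measure X))) := by
    intro h hh
    exact (ProbabilityMeasure.tendsto_iff_forall_integral_tendsto.1 hlim)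
      (BoundedContinuousFunction.mkOfCompact ⟨h, hh⟩)
  have hinv : MeasurePreserving f (μ : Measure X) μ := by
    refine ⟨hf.measurable, ?_⟩
    have := Measure.isProbabilityMeasure_map (μ := (μ : Measure X)) hf.measurable.aemeasurable
    refine ext_of_forall_integral_eq_of_IsFiniteMeasure fun h => ?_
    rw [integral_map hf.measurable.aemeasurable h.continuous.aestronglyMeasurable]
    have h1 := (hgint _ (h.continuous.comp hf)).sub (hgint _ h.continuous)
    have h2 : Tendsto (fun j => ∫ x, h (f x) ∂(ν j : Measure X) - ∫ x, h x ∂(ν j : Measure X)) U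
        (𝓝 0) := by
      have h3 : Tendsto (fun j => 2 * ‖h‖ / (n j : ℝ)) U (𝓝 0) := hnU.const_div_atTop _
      refine squeeze_zero_norm' ?_ h3
      filter_upwards [hpos] with j hj
      exact (hν j hj).1 h ‖h‖ h.continuous fun x => h.norm_coe_le_norm x
    exact sub_eq_zero.1 (tendsto_nhds_unique h1 h2)
  obtain ⟨k, ξ, hξ, hdiam, hnull⟩ := exists_partition_null_frontier (μ : Measure X) hε
  refine ⟨μ, inferInstance, hinv, k, ξ, hξ, fun q => ?_⟩
  rcases Nat.eq_zero_or_pos q with rfl | hq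
  · simpa using ent_nonneg (μ : Measure X) (itin f ξ 0)
  have hentlim : Tendsto (fun j => ent (ν j : Measure X) (itin f ξ q)) U
      (𝓝 (ent (μ : Measure X) (itin f ξ q))) := by
    refine tendsto_finsetSum _ fun w _ => (Real.continuous_negMulLog.tendsto _).comp ?_
    refine (ENNReal.tendsto_toReal (measure_ne_top _ _)).comp ?_
    exact ProbabilityMeasure.tendsto_measure_of_null_frontier_of_tendsto' hlim
      (measure_frontier_itin_eq_zero _ hinv hf hnull w)
  have hq' : (0 : ℝ) < q := by exact_mod_cast hq
  refine le_of_forall_pos_le_add fun δ hδ => ?_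
  have hδq : 0 < δ / q := by positivity
  have hl : Tendsto (fun j => q * (-(δ / q) - ∫ x, g x ∂(ν j : Measure X))) U
      (𝓝 (q * (-(δ / q) - ∫ x, g x ∂(μ : Measure X)))) :=
    (tendsto_const_nhds.sub (hgint g hg)).const_mul _
  have hr : Tendsto (fun j => ent (ν j : Measure X) (itin f ξ q) +
      2 * q ^ 2 * Real.log k / (n j : ℝ)) U (𝓝 (ent (μ : Measure X) (itin f ξ q) + 0)) :=
    hentlim.add (hnU.const_div_atTop _)
  have hle := le_of_tendsto_of_tendsto hl hr (by
    filter_upwards [hpos, hU (hZ _ hδq)] with j hj hZj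
    have hj' : (0 : ℝ) < n j := by exact_mod_cast hj
    have h1 := (hν j hj).2 k ξ hξ hdiam q hq
    have h2 : (q : ℝ) * (-(δ / q * n j) - n j * ∫ x, g x ∂(ν j : Measure X)) ≤
        n j * ent (ν j : Measure X) (itin f ξ q) + 2 * q ^ 2 * Real.log k := by
      refine le_trans ?_ h1
      gcongr
    rw [← mul_le_mul_iff_right₀ hj', mul_add, mul_div_cancel₀ _ hj'.ne']
    linarith)
  have : (q : ℝ) * (δ / q) = δ := by field_simp
  linarith

end Empirical

section Bridging

lemma coe_le_add_mul_inv_iff {a b c : ℝ} (hb : 0 < b) (h : EReal) :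
    (c : EReal) ≤ (h + a) * ((b⁻¹ : ℝ) : EReal) ↔ ((c * b - a : ℝ) : EReal) ≤ h := by
  induction h with
  | bot =>
    simp [EReal.bot_mul_coe_of_pos (inv_pos.2 hb), -EReal.coe_sub, -EReal.coe_mul]
  | coe h =>
    norm_cast
    rw [← div_eq_mul_inv, le_div_iff₀ hb, sub_le_iff_le_add]
  | top => simp [EReal.top_mul_coe_of_pos (inv_pos.2 hb)]

lemma add_mul_inv_le_coe_iff {a b c : ℝ} (hb : 0 < b) (h : EReal) :
    (h + a) * ((b⁻¹ : ℝ) : EReal) ≤ (c : EReal) ↔ h ≤ ((c * b - a : ℝ) : EReal) := by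
  induction h with
  | bot => simp [EReal.bot_mul_coe_of_pos (inv_pos.2 hb)]
  | coe h =>
    norm_cast
    rw [← div_eq_mul_inv, div_le_iff₀ hb, le_sub_iff_add_le]
  | top =>
    simp [EReal.top_mul_coe_of_pos (inv_pos.2 hb), -EReal.coe_sub, -EReal.coe_mul]

lemma partitionEntropy_fibres [MeasurableSpace X] (μ : Measure X) (f : X → X) {k : ℕ}
    (ξ : X → Fin k) (n : ℕ) :
    partitionEntropy μ f (fun i => ξ ⁻¹' {i}) n = ent μ (itin f ξ n) := by
  refine Finset.sum_congr rfl fun w _ => ?_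
  have : cellOf f (fun i => ξ ⁻¹' {i}) w = itin f ξ n ⁻¹' {w} := by
    ext x; simp [cellOf, itin, funext_iff]
  rw [this, measureReal_def]

lemma FinMeas.isMeasPartition [MeasurableSpace X] {k : ℕ} {ξ : X → Fin k} (hξ : FinMeas ξ) :
    IsMeasPartition fun i => ξ ⁻¹' {i} :=
  ⟨fun i => hξ {i}, fun i j hij => Disjoint.preimage _ (by simpa using hij), by ext x; simp⟩

lemma IsMeasPartition.exists_fibres [MeasurableSpace X] {k : ℕ} {P : Fin k → Set X}
    (hP : IsMeasPartition P) : ∃ ξ : X → Fin k, FinMeas ξ ∧ P = fun i => ξ ⁻¹' {i} := by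
  obtain ⟨hm, hd, hu⟩ := hP
  have hex : ∀ x, ∃ i, x ∈ P i := fun x => mem_iUnion.1 (hu ▸ mem_univ x)
  choose ξ hξ using hex
  have hPξ : P = fun i => ξ ⁻¹' {i} := by
    ext i x
    refine ⟨fun hx => ?_, ?_⟩
    · by_contra hne
      exact (hd hne).le_bot ⟨hξ x, hx⟩
    · rintro rfl
      exact hξ x
  exact ⟨ξ, .of_singleton fun i => by simpa [hPξ] using hm i, hPξ⟩

lemma coe_le_ksEntropy [MeasurableSpace X] {μ : Measure X} {f : X → X} {k : ℕ} {ξ : X → Fin k}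
    (hξ : FinMeas ξ) {c : ℝ} (h : ∀ q : ℕ, q * c ≤ ent μ (itin f ξ q)) :
    (c : EReal) ≤ ksEntropy μ f := by
  refine le_iSup₂_of_le k (fun i => ξ ⁻¹' {i}) (le_iSup_of_le hξ.isMeasPartition ?_)
  refine le_iInf fun n => ?_
  rw [EReal.coe_le_coe_iff, partitionEntropy_fibres, le_inv_mul_iff₀ (by positivity)]
  exact_mod_cast h (n + 1)

lemma ksEntropy_le_coe [MeasurableSpace X] {μ : Measure X} {f : X → X} {c : ℝ}
    (h : ∀ (k : ℕ) (ξ : X → Fin k), FinMeas ξ → ∀ δ > 0,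
      ∃ n, 0 < n ∧ ent μ (itin f ξ n) ≤ n * (δ + c)) :
    ksEntropy μ f ≤ (c : EReal) := by
  refine iSup₂_le fun k P => iSup_le fun hP => ?_
  obtain ⟨ξ, hξ, rfl⟩ := hP.exists_fibres
  refine EReal.le_of_forall_lt_iff_le.1 fun z hz => ?_
  obtain ⟨n, hn, hle⟩ := h k ξ hξ (z - c) (sub_pos.2 (EReal.coe_lt_coe_iff.1 hz))
  obtain ⟨n, rfl⟩ := Nat.exists_eq_add_of_le' hn
  refine iInf_le_of_le n ?_
  rw [EReal.coe_le_coe_iff, partitionEntropy_fibres, inv_mul_le_iff₀ (by positivity)]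
  simpa using hle

end Bridging

section Estimates

lemma eventually_add_log_le (C : ℝ) (D : ℕ) {δ : ℝ} (hδ : 0 < δ) :
    ∀ᶠ n : ℕ in atTop, C + Real.log ((n + 1) * D + 1) ≤ δ * n := by
  have h1 : ∀ᶠ x : ℝ in atTop, Real.log x ≤ δ / (4 * (D + 1)) * x := by
    have := (Real.isLittleO_log_id_atTop).def (c := δ / (4 * (D + 1))) (by positivity)
    filter_upwards [this, eventually_ge_atTop 0] with x hx h0
    simpa [abs_of_nonneg h0] using (le_abs_self _).trans hx
  have ht : Tendsto (fun n : ℕ => 2 * ((D : ℝ) + 1) * n) atTop atTop :=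
    tendsto_natCast_atTop_atTop.const_mul_atTop (by positivity)
  have h2 : ∀ᶠ n : ℕ in atTop, 2 * C / δ ≤ n :=
    tendsto_natCast_atTop_atTop.eventually_ge_atTop _
  filter_upwards [ht.eventually h1, h2, eventually_ge_atTop 1] with n hn hC h1n
  have h1n : (1 : ℝ) ≤ n := by exact_mod_cast h1n
  have h3 : Real.log ((n + 1) * D + 1) ≤ Real.log (2 * (D + 1) * n) := by
    refine Real.log_le_log (by positivity) ?_
    nlinarith [(Nat.cast_nonneg D : (0 : ℝ) ≤ D)]
  have h4 : δ / (4 * ((D : ℝ) + 1)) * (2 * (D + 1) * n) = δ / 2 * n := by field_simp; ring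
  rw [div_le_iff₀ hδ] at hC
  linarith

lemma sum_biUnion_le {ι α : Type*} [DecidableEq α] (s : Finset ι) (t : ι → Finset α) {w : α → ℝ}
    (hw : ∀ x, 0 ≤ w x) : ∑ x ∈ s.biUnion t, w x ≤ ∑ i ∈ s, ∑ x ∈ t i, w x := by
  classical
  induction s using Finset.induction_on with
  | empty => simp
  | insert i s hi ih =>
    rw [Finset.biUnion_insert, Finset.sum_insert hi]
    have := Finset.sum_union_inter (s₁ := t i) (s₂ := s.biUnion t) (f := w)
    have h0 : 0 ≤ ∑ x ∈ t i ∩ s.biUnion t, w x := Finset.sum_nonneg fun x _ => hw x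
    linarith

lemma exists_separated_spanning [MetricSpace X] [CompactSpace X] {f : X → X} (hf : Continuous f)
    (n : ℕ) {ε : ℝ} (hε : 0 < ε) (Z : Set X) :
    ∃ E : Finset X, (E : Set X) ⊆ Z ∧ IsSeparatedSet f n ε E ∧ IsSpanningSet f n ε Z E := by
  classical
  have hopen : ∀ x : X, {y | ∀ i < n, dist (f^[i] x) (f^[i] y) < ε / 2} ∈ 𝓝 x := by
    intro x
    have : {y | ∀ i < n, dist (f^[i] x) (f^[i] y) < ε / 2} =
        ⋂ i ∈ Finset.range n, {y | dist (f^[i] x) (f^[i] y) < ε / 2} := by ext; simp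
    rw [this]
    refine (Filter.biInter_finset_mem _).2 fun i _ => ?_
    refine (isOpen_lt ((continuous_const).dist (hf.iterate i)) continuous_const).mem_nhds ?_
    simpa using hε
  obtain ⟨C, -, hC⟩ := isCompact_univ.elim_nhds_subcover _ fun x _ => hopen x
  have hcov : ∀ y, ∃ x ∈ C, ∀ i < n, dist (f^[i] x) (f^[i] y) < ε / 2 := fun y => by
    simpa using hC (mem_univ y)
  choose c hcC hc using hcov
  let S : Set ℕ := {k | ∃ E : Finset X, (E : Set X) ⊆ Z ∧ IsSeparatedSet f n ε E ∧ E.card = k}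
  have hS : S.Nonempty := ⟨0, ∅, by simp [IsSeparatedSet]⟩
  have hb : BddAbove S := by
    refine ⟨C.card, ?_⟩
    rintro _ ⟨E, -, hE, rfl⟩
    refine Finset.card_le_card_of_injOn c (fun y _ => hcC y) fun x hx y hy hxy => ?_
    by_contra hne
    refine (hE x hx y hy hne).not_ge (dynDist_le_of_forall hε.le fun i hi => ?_)
    have h1 := hc x i hi
    have h2 := hc y i hi
    rw [hxy] at h1
    have := dist_triangle_left (f^[i] x) (f^[i] y) (f^[i] (c y))
    linarith
  obtain ⟨E, hEZ, hE, hcard⟩ := Nat.sSup_mem hS hb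
  refine ⟨E, hEZ, hE, fun y hy => ?_⟩
  by_contra! hfar
  have hyE : y ∉ E := fun h => (hfar y h).not_ge (by simpa [dynDist_self] using hε.le)
  have : (insert y E).card ∈ S := by
    refine ⟨insert y E, by simp [insert_subset_iff, hy, hEZ], ?_, rfl⟩
    intro a ha b hb hab
    rcases Finset.mem_insert.1 ha with ha | ha <;> rcases Finset.mem_insert.1 hb with hb | hb
    · exact absurd (ha.trans hb.symm) hab
    · rw [ha, dynDist_comm]; exact hfar b hb
    · rw [hb]; exact hfar a ha
    · exact hE a ha b hb hab
  have := le_csSup hb this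
  rw [Finset.card_insert_of_notMem hyE] at this
  omega

end Estimates

section Induced

lemma birkhoff_succ (f : X → X) (g : X → ℝ) (n : ℕ) (x : X) :
    birkhoff f g (n + 1) x = birkhoff f g n x + g (f^[n] x) :=
  Finset.sum_range_succ _ _

lemma mul_le_birkhoff (f : X → X) {g : X → ℝ} {a : ℝ} (h : ∀ x, a ≤ g x) (n : ℕ) (x : X) :
    n * a ≤ birkhoff f g n x := by
  simpa [birkhoff] using Finset.card_nsmul_le_sum (Finset.range n) _ a fun i _ => h (f^[i] x)

lemma birkhoff_le_mul (f : X → X) {g : X → ℝ} {b : ℝ} (h : ∀ x, g x ≤ b) (n : ℕ) (x : X) :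
    birkhoff f g n x ≤ n * b := by
  simpa [birkhoff] using Finset.sum_le_card_nsmul (Finset.range n) _ b fun i _ => h (f^[i] x)

lemma birkhoff_sub_mul (f : X → X) (φ ψ : X → ℝ) (c : ℝ) (n : ℕ) (x : X) :
    birkhoff f (fun x => φ x - c * ψ x) n x = birkhoff f φ n x - c * birkhoff f ψ n x := by
  simp [birkhoff, Finset.sum_sub_distrib, Finset.mul_sum]

variable {f : X → X} {φ ψ : X → ℝ} {m : ℝ} {D : ℕ}

lemma abs_birkhoff_sub_le_of_mem_Xset (hψ0 : ∀ x, 0 ≤ ψ x) {M : ℝ} (hM : ∀ x, ψ x ≤ M)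
    {T : ℝ} {n : ℕ} {x : X} (hx : x ∈ Xset f ψ T n) : |birkhoff f ψ n x - T| ≤ M := by
  obtain ⟨h1, h2⟩ := hx
  rw [birkhoff_succ] at h2
  have := hM (f^[n] x)
  have := hψ0 (f^[n] x)
  rw [abs_le]
  constructor <;> linarith

lemma exists_mem_Xset (hm : 0 < m) (hψm : ∀ x, m ≤ ψ x) {T : ℝ} (hT : 0 ≤ T) (x : X) :
    ∃ n, x ∈ Xset f ψ T n := by
  classical
  have hex : ∃ k, T < birkhoff f ψ k x := by
    obtain ⟨k, hk⟩ := exists_nat_gt (T / m)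
    exact ⟨k, ((div_lt_iff₀ hm).1 hk).trans_le (mul_le_birkhoff f hψm k x)⟩
  have hspec := Nat.find_spec hex
  have hmin := fun k => Nat.find_min hex (m := k)
  cases hk : Nat.find hex with
  | zero =>
    rw [hk] at hspec
    exact absurd hspec (by simpa [birkhoff] using hT)
  | succ n =>
    rw [hk] at hspec hmin
    exact ⟨n, not_lt.1 (hmin n n.lt_succ_self), hspec⟩

lemma lt_of_mem_STset (hm : 0 < m) (hψm : ∀ x, m ≤ ψ x) {T : ℝ} {n : ℕ}
    (hn : n ∈ STset f ψ T) : n < ⌊T / m⌋₊ + 1 := by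
  obtain ⟨x, hx, -⟩ := hn
  exact Nat.lt_succ_of_le
    (Nat.le_floor ((le_div_iff₀ hm).2 ((mul_le_birkhoff f hψm n x).trans hx)))

lemma tsum_STset_eq_sum (hm : 0 < m) (hψm : ∀ x, m ≤ ψ x) (T : ℝ) (a : ℕ → ℝ) :
    ∑' n, (STset f ψ T).indicator a n =
      ∑ n ∈ Finset.range (⌊T / m⌋₊ + 1), (STset f ψ T).indicator a n :=
  tsum_eq_sum fun _ hn => indicator_of_notMem
    (fun h => hn (Finset.mem_range.2 (lt_of_mem_STset hm hψm h))) _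

lemma le_tsum_STset (hm : 0 < m) (hψm : ∀ x, m ≤ ψ x) {T : ℝ} {a : ℕ → ℝ} (ha : ∀ n, 0 ≤ a n)
    {n : ℕ} (hn : n ∈ STset f ψ T) : a n ≤ ∑' n, (STset f ψ T).indicator a n := by
  rw [tsum_STset_eq_sum hm hψm]
  refine le_of_eq_of_le (indicator_of_mem hn a).symm
    (Finset.single_le_sum (fun i _ => indicator_nonneg (fun i _ => ha i) i)
      (Finset.mem_range.2 (lt_of_mem_STset hm hψm hn)))

lemma sum_exp_nonneg (g : X → ℝ) (F : Finset X) : 0 ≤ ∑ x ∈ F, Real.exp (g x) :=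
  Finset.sum_nonneg fun _ _ => (Real.exp_pos _).le

variable [MetricSpace X]

lemma Qspan_le {T ε : ℝ} {F : ℕ → Finset X}
    (hF : ∀ n ∈ STset f ψ T, IsSpanningSet f n ε (Xset f ψ T n) (F n)) :
    Qspan f φ ψ T ε ≤ ∑' n, (STset f ψ T).indicator
      (fun n => ∑ x ∈ F n, Real.exp (birkhoff f φ n x)) n := by
  refine csInf_le ⟨0, ?_⟩ ⟨F, hF, rfl⟩
  rintro _ ⟨F, -, rfl⟩
  exact tsum_nonneg fun n => indicator_nonneg (fun n _ => sum_exp_nonneg _ _) n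

variable [CompactSpace X]

lemma nonempty_Qspan_values (hf : Continuous f) (T : ℝ) {ε : ℝ} (hε : 0 < ε) :
    { r : ℝ | ∃ F : ℕ → Finset X,
      (∀ n ∈ STset f ψ T, IsSpanningSet f n ε (Xset f ψ T n) (F n)) ∧
      r = ∑' n : ℕ, Set.indicator (STset f ψ T)
        (fun n => ∑ x ∈ F n, Real.exp (birkhoff f φ n x)) n }.Nonempty := by
  choose F _ _ hF using fun n => exists_separated_spanning hf n hε (Xset f ψ T n)
  exact ⟨_, F, fun n _ => hF n, rfl⟩

lemma exists_spanning_of_Qspan_lt (hf : Continuous f) (hm : 0 < m) (hψm : ∀ x, m ≤ ψ x)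
    {T ε r : ℝ} (hε : 0 < ε) (hr : 0 < r) (hQ : Qspan f φ ψ T ε < r) (n : ℕ) :
    ∃ F : Finset X, IsSpanningSet f n ε (Xset f ψ T n) F ∧
      ∑ x ∈ F, Real.exp (birkhoff f φ n x) ≤ r := by
  by_cases hn : n ∈ STset f ψ T
  · obtain ⟨_, ⟨F, hF, rfl⟩, hlt⟩ :=
      exists_lt_of_csInf_lt (nonempty_Qspan_values hf T hε) hQ
    exact ⟨F n, hF n hn, (le_tsum_STset (a := fun n => ∑ x ∈ F n, Real.exp (birkhoff f φ n x))
      hm hψm (fun n => sum_exp_nonneg _ _) hn).trans hlt.le⟩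
  · exact ⟨∅, fun y hy => absurd ⟨y, hy⟩ hn, by simpa using hr.le⟩

lemma Qspan_pos [Nonempty X] (hf : Continuous f) (hφ : Continuous φ) (hm : 0 < m)
    (hψm : ∀ x, m ≤ ψ x) {T ε : ℝ} (hT : 0 ≤ T) (hε : 0 < ε) : 0 < Qspan f φ ψ T ε := by
  obtain ⟨y⟩ := ‹Nonempty X›
  obtain ⟨n, hn⟩ := exists_mem_Xset (f := f) hm hψm hT y
  obtain ⟨z, hz⟩ := (continuous_birkhoff hf hφ n).exists_forall_le' (x₀ := y) (by simp)
  refine (Real.exp_pos (birkhoff f φ n z)).trans_le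
    (le_csInf (nonempty_Qspan_values hf T hε) ?_)
  rintro _ ⟨F, hF, rfl⟩
  obtain ⟨x, hx, -⟩ := hF n ⟨y, hn⟩ y hn
  refine le_trans ?_ (le_tsum_STset (a := fun n => ∑ x ∈ F n, Real.exp (birkhoff f φ n x))
    hm hψm (fun n => sum_exp_nonneg _ _) ⟨y, hn⟩)
  exact (Real.exp_le_exp.2 (hz x)).trans
    (Finset.single_le_sum (f := fun x => Real.exp (birkhoff f φ n x))
      (fun _ _ => (Real.exp_pos _).le) hx)

/-- A large value of `Qspan` is witnessed by a large separated set at a single time. -/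
lemma exists_separated_of_lt_Qspan (hf : Continuous f) (hm : 0 < m) (hψm : ∀ x, m ≤ ψ x)
    (hψD : ∀ x, ψ x ≤ D * m) {c T ε : ℝ} (hT : 0 ≤ T) (hε : 0 < ε)
    (hQ : Real.exp (c * T) < Qspan f φ ψ T ε) :
    ∃ (n : ℕ) (E : Finset X), T < (n + 1) * (D * m) ∧ E.Nonempty ∧ IsSeparatedSet f n ε E ∧
      -(|c| * (D * m) + Real.log ((n + 1) * D + 1)) ≤
        Real.log (∑ x ∈ E, Real.exp (birkhoff f (fun x => φ x - c * ψ x) n x)) := by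
  choose E hEZ hEsep hEspan using fun n => exists_separated_spanning hf n hε (Xset f ψ T n)
  have hlt := hQ.trans_le (Qspan_le (φ := φ) fun n _ => hEspan n)
  rw [tsum_STset_eq_sum hm hψm] at hlt
  set N := ⌊T / m⌋₊ with hN
  have hsum : ∑ n ∈ Finset.range (N + 1), Real.exp (c * T) / (N + 1) = Real.exp (c * T) := by
    simp; field_simp
  obtain ⟨n, -, hn⟩ := Finset.exists_lt_of_sum_lt (hsum.trans_lt hlt)
  have hnS : n ∈ STset f ψ T := by
    by_contra hnS
    rw [indicator_of_notMem hnS] at hn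
    exact hn.not_ge (by positivity)
  rw [indicator_of_mem hnS] at hn
  have hTn : T < (n + 1) * (D * m) := by
    obtain ⟨x, -, hx⟩ := hnS
    exact_mod_cast hx.trans_le (birkhoff_le_mul f hψD (n + 1) x)
  have hNn : (N : ℝ) + 1 ≤ (n + 1) * D + 1 := by
    have h1 : (N : ℝ) ≤ T / m := Nat.floor_le (by positivity)
    have h2 : T / m ≤ (n + 1) * D := by
      rw [div_le_iff₀ hm]; linarith
    linarith
  refine ⟨n, E n, hTn, ?_, hEsep n, ?_⟩
  · rw [Finset.nonempty_iff_ne_empty]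
    intro h
    rw [h, Finset.sum_empty] at hn
    exact hn.not_ge (by positivity)
  · have hterm : ∀ x ∈ E n, Real.exp (-(c * T) - |c| * (D * m)) * Real.exp (birkhoff f φ n x) ≤
        Real.exp (birkhoff f (fun x => φ x - c * ψ x) n x) := fun x hx => by
      rw [← Real.exp_add, Real.exp_le_exp, birkhoff_sub_mul]
      have h1 := abs_birkhoff_sub_le_of_mem_Xset (fun x => hm.le.trans (hψm x)) hψD (hEZ n hx)
      have h2 := (le_abs_self _).trans ((abs_mul c (birkhoff f ψ n x - T)).le.trans
        (mul_le_mul_of_nonneg_left h1 (abs_nonneg c)))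
      linarith
    have hge := Finset.sum_le_sum hterm
    rw [← Finset.mul_sum] at hge
    have hlow : Real.exp (-(c * T) - |c| * (D * m)) * (Real.exp (c * T) / (N + 1)) ≤
        ∑ x ∈ E n, Real.exp (birkhoff f (fun x => φ x - c * ψ x) n x) :=
      (mul_le_mul_of_nonneg_left hn.le (Real.exp_pos _).le).trans hge
    refine le_trans ?_ (Real.log_le_log (by positivity) hlow)
    rw [Real.log_mul (by positivity) (by positivity), Real.log_div (by positivity) (by positivity),
      Real.log_exp, Real.log_exp]
    have := Real.log_le_log (by positivity) hNn
    linarith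

/-- Exponential bounds on `Qspan` give small spanning sums for `φ - β ψ`. -/
lemma eventually_exists_spanning (hf : Continuous f) (hψ : Continuous ψ) (hm : 0 < m)
    (hψm : ∀ x, m ≤ ψ x) (hψD : ∀ x, ψ x ≤ D * m) {α β : ℝ} (hαβ : α < β)
    (hQ : ∀ ε > 0, ∀ᶠ T : ℝ in atTop, Qspan f φ ψ T ε < Real.exp (α * T)) {ε : ℝ} (hε : 0 < ε) :
    ∀ᶠ n in atTop, ∃ F : Finset X, IsSpanningSet f n ε univ F ∧
      ∑ x ∈ F, Real.exp (birkhoff f (fun x => φ x - β * ψ x) n x) ≤ 1 := by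
  classical
  set γ := (β - α) * m / 2 with hγ
  have hγ0 : 0 < γ := by have := sub_pos.2 hαβ; positivity
  set τ := γ / (|β| + 1) with hτ
  have hβ0 := abs_nonneg β
  have hτ0 : 0 < τ := by positivity
  have hβτ : |β| * τ ≤ γ := by
    rw [hτ, mul_div_assoc', div_le_iff₀ (by positivity)]
    nlinarith
  obtain ⟨ε₁, hε₁, hmod⟩ := exists_modulus hψ hτ0
  set η := min ε ε₁ with hη
  have hη0 : 0 < η := lt_min hε hε₁
  obtain ⟨T₀, hT₀⟩ := eventually_atTop.1 (hQ η hη0)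
  have hlarge : ∀ᶠ n : ℕ in atTop, T₀ / m ≤ n :=
    tendsto_natCast_atTop_atTop.eventually_ge_atTop _
  filter_upwards [hlarge, eventually_add_log_le (|β| * (D * m)) D hγ0] with n hn hlog
  rw [div_le_iff₀ hm] at hn
  have hpiece : ∀ T : ℝ, ∃ F : Finset X, IsSpanningSet f n ε (Xset f ψ T n) F ∧
      ∑ x ∈ F, Real.exp (birkhoff f (fun x => φ x - β * ψ x) n x) ≤
        Real.exp (|β| * (D * m) - γ * n) := by
    intro T
    rcases (Xset f ψ T n).eq_empty_or_nonempty with hemp | ⟨z, hz⟩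
    · exact ⟨∅, by simp [IsSpanningSet, hemp], by simpa using (Real.exp_pos _).le⟩
    have hnT : n * m ≤ T := (mul_le_birkhoff f hψm n z).trans hz.1
    obtain ⟨F, hF, hsum⟩ := exists_spanning_of_Qspan_lt hf hm hψm hη0 (Real.exp_pos _)
      (hT₀ T (hn.trans hnT)) n
    refine ⟨F.filter fun x => ∃ y ∈ Xset f ψ T n, dynDist f n x y ≤ η, fun y hy => ?_, ?_⟩
    · obtain ⟨x, hx, hxy⟩ := hF y hy
      exact ⟨x, Finset.mem_filter.2 ⟨hx, y, hy, hxy⟩, hxy.trans (min_le_left _ _)⟩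
    have hterm : ∀ x ∈ F.filter fun x => ∃ y ∈ Xset f ψ T n, dynDist f n x y ≤ η,
        Real.exp (birkhoff f (fun x => φ x - β * ψ x) n x) ≤
          Real.exp (|β| * (D * m) + n * γ - β * T) * Real.exp (birkhoff f φ n x) := by
      intro x hx
      obtain ⟨-, y, hy, hxy⟩ := Finset.mem_filter.1 hx
      rw [← Real.exp_add, Real.exp_le_exp, birkhoff_sub_mul]
      have h1 := abs_birkhoff_sub_le_of_mem_Xset (fun x => hm.le.trans (hψm x)) hψD hy
      have h2 := abs_birkhoff_sub_le hmod (hxy.trans (min_le_right _ _))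
      have h3 : |birkhoff f ψ n x - T| ≤ n * τ + D * m :=
        (abs_sub_le _ (birkhoff f ψ n y) _).trans (add_le_add h2 h1)
      have h4 := (neg_abs_le _).trans' (neg_le_neg ((abs_mul β (birkhoff f ψ n x - T)).le.trans
        (mul_le_mul_of_nonneg_left h3 hβ0)))
      have h5 := mul_le_mul_of_nonneg_left hβτ (Nat.cast_nonneg (α := ℝ) n)
      linarith
    calc _ ≤ _ := Finset.sum_le_sum hterm
      _ = Real.exp (|β| * (D * m) + n * γ - β * T) * _ := (Finset.mul_sum _ _ _).symm
      _ ≤ Real.exp (|β| * (D * m) + n * γ - β * T) * Real.exp (α * T) :=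
        mul_le_mul_of_nonneg_left ((Finset.sum_le_sum_of_subset_of_nonneg
          (Finset.filter_subset _ _) fun _ _ _ => (Real.exp_pos _).le).trans hsum)
          (Real.exp_pos _).le
      _ ≤ Real.exp (|β| * (D * m) - γ * n) := by
        rw [← Real.exp_add, Real.exp_le_exp]
        have := mul_le_mul_of_nonneg_left hnT (sub_pos.2 hαβ).le
        rw [hγ]
        linarith
  choose F hF hFsum using hpiece
  refine ⟨(Finset.range (n * D + 1)).biUnion fun k => F (k * m), fun y _ => ?_, ?_⟩
  · set S := birkhoff f ψ n y with hS
    have hS0 : 0 ≤ S := le_trans (by positivity) (mul_le_birkhoff f hψm n y)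
    have hSD : S ≤ n * (D * m) := birkhoff_le_mul f hψD n y
    have hk : ⌈S / m⌉₊ ≤ n * D := Nat.ceil_le.2 <| by
      rw [div_le_iff₀ hm]; push_cast; linarith
    have hy : y ∈ Xset f ψ (⌈S / m⌉₊ * m) n := by
      refine ⟨(div_le_iff₀ hm).1 (Nat.le_ceil _), ?_⟩
      have h1 := mul_lt_mul_of_pos_right (Nat.ceil_lt_add_one (div_nonneg hS0 hm.le)) hm
      rw [add_mul, div_mul_cancel₀ _ hm.ne'] at h1
      rw [birkhoff_succ]
      have := hψm (f^[n] y)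
      linarith
    obtain ⟨x, hx, hxy⟩ := hF _ y hy
    exact ⟨x, Finset.mem_biUnion.2 ⟨_, Finset.mem_range.2 (by omega), hx⟩, hxy⟩
  · calc _ ≤ _ := sum_biUnion_le _ _ fun _ => (Real.exp_pos _).le
      _ ≤ ∑ k ∈ Finset.range (n * D + 1), Real.exp (|β| * (D * m) - γ * n) :=
        Finset.sum_le_sum fun k _ => hFsum _
      _ = (n * D + 1 : ℝ) * Real.exp (|β| * (D * m) - γ * n) := by simp
      _ ≤ ((n + 1) * D + 1 : ℝ) * Real.exp (|β| * (D * m) - γ * n) := by gcongr; simp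
      _ = Real.exp (Real.log ((n + 1) * D + 1) + (|β| * (D * m) - γ * n)) := by
        rw [Real.exp_add, Real.exp_log (by positivity)]
      _ ≤ 1 := Real.exp_le_one_iff.2 (by linarith)

end Induced

section Variational

lemma exists_pos_le_and_le_mul [TopologicalSpace X] [CompactSpace X] [Nonempty X] {ψ : X → ℝ}
    (hψ : Continuous ψ) (hpos : ∀ x, 0 < ψ x) :
    ∃ (m : ℝ) (D : ℕ), 0 < m ∧ (∀ x, m ≤ ψ x) ∧ ∀ x, ψ x ≤ D * m := by
  obtain ⟨a, -, ha⟩ := isCompact_univ.exists_isMinOn univ_nonempty hψ.continuousOn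
  obtain ⟨b, -, hb⟩ := isCompact_univ.exists_isMaxOn univ_nonempty hψ.continuousOn
  obtain ⟨D, hD⟩ := exists_nat_ge (ψ b / ψ a)
  exact ⟨ψ a, D, hpos a, fun x => ha (mem_univ x),
    fun x => (hb (mem_univ x)).trans ((div_le_iff₀ (hpos a)).1 hD)⟩

variable [MetricSpace X] [CompactSpace X] [MeasurableSpace X] [BorelSpace X]
  {f : X → X} {φ ψ : X → ℝ} {m : ℝ} {D : ℕ}

lemma integral_pos_of_le (μ : Measure X) [IsProbabilityMeasure μ] (hψ : Continuous ψ)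
    (hm : 0 < m) (hψm : ∀ x, m ≤ ψ x) : 0 < ∫ x, ψ x ∂μ :=
  hm.trans_le (by
    simpa using integral_mono (integrable_const m) (integrable_of_continuous μ hψ) hψm)

lemma integral_sub_mul (μ : Measure X) [IsProbabilityMeasure μ] (hφ : Continuous φ)
    (hψ : Continuous ψ) (c : ℝ) :
    ∫ x, (φ x - c * ψ x) ∂μ = ∫ x, φ x ∂μ - c * ∫ x, ψ x ∂μ := by
  rw [integral_sub (integrable_of_continuous μ hφ)
    ((integrable_of_continuous μ hψ).const_mul c), integral_const_mul]

/-- An exponential lower bound for `Qspan` along a sequence produces an invariant measure. -/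
lemma exists_invariant_measure_of_frequently [Nonempty X] (hf : Continuous f) (hφ : Continuous φ)
    (hψ : Continuous ψ) (hm : 0 < m) (hψm : ∀ x, m ≤ ψ x) (hψD : ∀ x, ψ x ≤ D * m) {c ε : ℝ}
    (hε : 0 < ε) (hQ : ∃ᶠ T : ℝ in atTop, Real.exp (c * T) < Qspan f φ ψ T ε) :
    ∃ μ : Measure X, IsProbabilityMeasure μ ∧ MeasurePreserving f μ μ ∧
      (c : EReal) ≤ (ksEntropy μ f + ((∫ x, φ x ∂μ : ℝ) : EReal)) *
        (((∫ x, ψ x ∂μ)⁻¹ : ℝ) : EReal) := by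
  have hex : ∀ j : ℕ, ∃ T : ℝ, (j : ℝ) ≤ T ∧ Real.exp (c * T) < Qspan f φ ψ T ε := fun j => by
    simpa using frequently_atTop.1 hQ j
  choose T hjT hT using hex
  choose n E hTn hE hsep hlog using fun j =>
    exists_separated_of_lt_Qspan hf hm hψm hψD ((Nat.cast_nonneg j).trans (hjT j)) hε (hT j)
  have hn : Tendsto n atTop atTop := by
    refine tendsto_atTop.2 fun N => ?_
    obtain ⟨J, hJ⟩ := exists_nat_ge ((N : ℝ) * (D * m))
    filter_upwards [eventually_ge_atTop J] with j hj
    have hj : (J : ℝ) ≤ j := by exact_mod_cast hj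
    have hlt : (N : ℝ) * (D * m) < (n j + 1) * (D * m) :=
      (hJ.trans (hj.trans (hjT j))).trans_lt (hTn j)
    have := lt_of_mul_lt_mul_right hlt (by positivity)
    exact Nat.le_of_lt_succ (by exact_mod_cast this)
  have hg : Continuous fun x => φ x - c * ψ x := hφ.sub (continuous_const.mul hψ)
  obtain ⟨μ, hμ, hfμ, k, ξ, hξ, hent⟩ := exists_invariant_measure hf hg hε n hn E hE hsep
    fun δ hδ => (hn.eventually (eventually_add_log_le (|c| * (D * m)) D hδ)).mono
      fun j hj => (neg_le_neg hj).trans (hlog j)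
  refine ⟨μ, hμ, hfμ, (coe_le_add_mul_inv_iff (integral_pos_of_le μ hψ hm hψm) _).2
    (coe_le_ksEntropy hξ fun q => le_of_eq_of_le ?_ (hent q))⟩
  rw [integral_sub_mul μ hφ hψ]
  ring

lemma entropy_ratio_le [Nonempty X] (μ : Measure X) [IsProbabilityMeasure μ]
    (hfμ : MeasurePreserving f μ μ) (hf : Continuous f) (hφ : Continuous φ) (hψ : Continuous ψ)
    (hm : 0 < m) (hψm : ∀ x, m ≤ ψ x) (hψD : ∀ x, ψ x ≤ D * m) {α β : ℝ} (hαβ : α < β)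
    (hQ : ∀ ε > 0, ∀ᶠ T : ℝ in atTop, Qspan f φ ψ T ε < Real.exp (α * T)) :
    (ksEntropy μ f + ((∫ x, φ x ∂μ : ℝ) : EReal)) * (((∫ x, ψ x ∂μ)⁻¹ : ℝ) : EReal) ≤ β := by
  rw [add_mul_inv_le_coe_iff (integral_pos_of_le μ hψ hm hψm)]
  refine ksEntropy_le_coe fun k ξ hξ δ hδ => ?_
  have hg : Continuous fun x => φ x - β * ψ x := hφ.sub (continuous_const.mul hψ)
  obtain ⟨n, hn, hle⟩ := exists_ent_itin_le μ hfμ hf hg hξ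
    (fun ε hε => eventually_exists_spanning hf hψ hm hψm hψD hαβ hQ hε) hδ
  refine ⟨n, hn, hle.trans_eq ?_⟩
  rw [integral_sub_mul μ hφ hψ]
  ring

end Variational

/-- variational principle for the induced pressure:
`P_ψ(φ) = sup_ν (h_ν(f) + ∫φ dν) / ∫ψ dν` over invariant probability measures. -/
theorem stmt11 [MetricSpace X] [CompactSpace X] [Nonempty X]
    [MeasurableSpace X] [BorelSpace X]
    (f : X → X) (φ ψ : X → ℝ) (hf : Continuous f) (hφ : Continuous φ) (hψ : Continuous ψ)
    (hpos : ∀ x, 0 < ψ x) :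
    inducedPressure f φ ψ =
      ⨆ (μ : Measure X) (_ : IsProbabilityMeasure μ) (_ : MeasurePreserving f μ μ),
        (ksEntropy μ f + ((∫ x, φ x ∂μ : ℝ) : EReal)) *
          (((∫ x, ψ x ∂μ)⁻¹ : ℝ) : EReal) := by
  obtain ⟨m, D, hm, hψm, hψD⟩ := exists_pos_le_and_le_mul hψ hpos
  refine le_antisymm (iSup₂_le fun ε hε => ?_) (iSup_le fun μ => iSup₂_le fun hμ hfμ => ?_)
  · by_contra! hlt
    obtain ⟨c, hc, hclim⟩ := EReal.lt_iff_exists_real_btwn.1 hlt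
    have hfreq := (frequently_lt_of_lt_limsup (by isBoundedDefault) hclim).and_eventually
      (eventually_gt_atTop (0 : ℝ))
    obtain ⟨μ, hμ, hfμ, hle⟩ := exists_invariant_measure_of_frequently hf hφ hψ hm hψm hψD hε
      (hfreq.mono fun T hT => by
        have h := EReal.coe_lt_coe_iff.1 hT.1
        rw [lt_inv_mul_iff₀ hT.2, mul_comm] at h
        exact (Real.lt_log_iff_exp_lt (Qspan_pos hf hφ hm hψm hT.2.le hε)).1 h)
    exact hc.not_ge (hle.trans
      (le_iSup_of_le μ (le_iSup₂_of_le hμ hfμ le_rfl)))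
  · by_contra! hlt
    obtain ⟨β, hβ, hβv⟩ := EReal.lt_iff_exists_real_btwn.1 hlt
    obtain ⟨α, hα, hαβ⟩ := EReal.lt_iff_exists_real_btwn.1 hβ
    refine hβv.not_ge (entropy_ratio_le μ hfμ hf hφ hψ hm hψm hψD (EReal.coe_lt_coe_iff.1 hαβ)
      fun ε hε => ?_)
    have hlim := (le_iSup₂ (f := fun (ε : ℝ) (_ : 0 < ε) => limsup (fun T : ℝ =>
      ((T⁻¹ * Real.log (Qspan f φ ψ T ε) : ℝ) : EReal)) atTop) ε hε).trans_lt hα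
    filter_upwards [eventually_lt_of_limsup_lt hlim, eventually_gt_atTop 0] with T hT hT0
    rw [EReal.coe_lt_coe_iff, inv_mul_lt_iff₀ hT0, mul_comm] at hT
    exact (Real.log_lt_iff_lt_exp (Qspan_pos hf hφ hm hψm hT0.le hε)).1 hT
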